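/- arXiv:math/0308086 — 2 statements merged into one kernel-verified Lean document; each statement's English description precedes it below -/
import Mathlib

section
/- For every integer n ≥ 1, 2·(−1)ⁿ ∫₀^∞ x^{2n}·arctan(x)/(e^{2πx} − 1) dx = H_{2n+1}/(2n+1) + ∑_{k=0}^{2n} (−1)^k · C(2n, k) · ζ'(−k), where H_p = ∑_{j=1}^p 1/j is the p-th harmonic number, C(n,k) is the binomial coefficient, and ζ' the derivative of the Riemann zeta function. -/
open Real MeasureTheory Filter

/-- Hurwitz zeta function ζ(s, a) for real a > 0, via analytic continuation. -/
noncomputable def hurwitzZetaReal (s : ℂ) (a : ℝ) : ℂ :=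
  HurwitzZeta.hurwitzZeta (a : UnitAddCircle) s -
    ∑ k ∈ Finset.range (⌈a⌉₊ - 1), ((a - (⌈a⌉₊ - 1) + k : ℝ) : ℂ) ^ (-s)

/-- ζ'(-1, a): derivative of the Hurwitz zeta function w.r.t. s at s = -1. -/
noncomputable def hurwitzZetaDerivNegOne (a : ℝ) : ℂ :=
  deriv (fun s => hurwitzZetaReal s a) (-1)

/-- Logarithm of the Glaisher–Kinkelin constant: log A = 1/12 - ζ'(-1). -/
noncomputable def logA : ℂ := 1 / 12 - deriv riemannZeta (-1)

/-- log G(z+1) for z > 0, via log G(z+1) = z log Γ(z) + ζ'(-1) - ζ'(-1, z). -/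
noncomputable def logBarnesG1p (z : ℝ) : ℂ :=
  z * Real.log (Real.Gamma z) + deriv riemannZeta (-1) - hurwitzZetaDerivNegOne z

/-- log G(x) for x > 0, via the recurrence G(z+1) = Γ(z) G(z) on (0, 1]. -/
noncomputable def logBarnesG (x : ℝ) : ℂ :=
  if x ≤ 1 then logBarnesG1p x - Real.log (Real.Gamma x) else logBarnesG1p (x - 1)

/-- The Barnes G-function (for positive real argument). -/
noncomputable def barnesG (x : ℝ) : ℂ := Complex.exp (logBarnesG x)

/-- The digamma function ψ = (log Γ)'. -/
noncomputable def digamma (x : ℝ) : ℝ := deriv (fun t => Real.log (Real.Gamma t)) x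

/-- The trigamma function ψ⁽¹⁾ = (log Γ)''. -/
noncomputable def trigamma (x : ℝ) : ℝ :=
  deriv (deriv (fun t => Real.log (Real.Gamma t))) x

/-- The Clausen function Cl₂(x) = ∑_{k ≥ 1} sin(k x) / k². -/
noncomputable def clausen2 (x : ℝ) : ℝ := ∑' k : ℕ, Real.sin ((k + 1) * x) / (k + 1) ^ 2

/-- Catalan's constant. -/
noncomputable def catalanConst : ℝ := ∑' k : ℕ, (-1 : ℝ) ^ k / (2 * (k : ℝ) + 1) ^ 2

/-!
Write `AP f` for `∫_0^∞ i (f(1 + ix) - f(1 - ix)) / (e^{2πx} - 1) dx`. Legendre's integral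
`∫_0^∞ sin(tx) / (e^{2πx} - 1) dx`, a consequence of the partial fraction expansion of `coth`, is
the Abel–Plana formula for `z ↦ e^{-tz}`. Integrating it against `t^{s-1}` gives
`ζ(s) = 1/2 + 1/(s-1) + AP(z^{-s})` for `Re s > 1`, and by analytic continuation for all `s ≠ 1`.
Differentiating in `s` yields `ζ'(-k) = -AP(z^k log z) - 1/(k+1)^2`. In the alternating binomial sum
over `k ≤ 2n` the terms `1/(k+1)^2` add up to `H_{2n+1}/(2n+1)`, and the powers `z^k` combine to
`(1-z)^{2n}`. This takes the same value `(-1)^n x^{2n}` at both points `1 ± ix`, so that only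
`log(1 + ix) - log(1 - ix) = 2i arctan x` survives.
-/

section AlternatingSums

variable {K : Type*} [Field K] [CharZero K]

lemma choose_div_add_one (N k : ℕ) :
    (N.choose k : K) / (k + 1) = ((N + 1).choose (k + 1) : K) / (N + 1) := by
  have hk : (k : K) + 1 ≠ 0 := Nat.cast_add_one_ne_zero k
  have hN : (N : K) + 1 ≠ 0 := Nat.cast_add_one_ne_zero N
  rw [div_eq_div_iff hk hN, mul_comm]
  exact_mod_cast N.add_one_mul_choose_eq k

lemma sum_neg_one_pow_mul_choose_div_add_one (N : ℕ) :
    ∑ k ∈ Finset.range (N + 1), (-1 : K) ^ k * ((N.choose k : K) / (k + 1)) = 1 / (N + 1) := by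
  have halt : ∑ k ∈ Finset.range (N + 2), (-1 : K) ^ k * (N + 1).choose k = 0 := by
    exact_mod_cast congrArg (Int.cast : ℤ → K)
      (Int.alternating_sum_range_choose_of_ne N.succ_ne_zero)
  rw [Finset.sum_range_succ'] at halt
  simp only [pow_succ, mul_neg_one, neg_mul, Finset.sum_neg_distrib, pow_zero,
    Nat.choose_zero_right, Nat.cast_one, one_mul] at halt
  simp_rw [choose_div_add_one, ← mul_div_assoc]
  rw [← Finset.sum_div, neg_add_eq_zero.mp halt]

lemma sum_neg_one_pow_mul_choose_succ_div_add_one (N : ℕ) :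
    ∑ k ∈ Finset.range N, (-1 : K) ^ k * ((N.choose (k + 1) : K) / (k + 1)) = harmonic N := by
  induction N with
  | zero => simp
  | succ N ih =>
    have hext : ∑ k ∈ Finset.range (N + 1), (-1 : K) ^ k * ((N.choose (k + 1) : K) / (k + 1)) =
        harmonic N := by
      rw [Finset.sum_range_succ, ih]; simp
    simp_rw [Nat.choose_succ_succ, Nat.cast_add, add_div, mul_add, Finset.sum_add_distrib]
    rw [hext, sum_neg_one_pow_mul_choose_div_add_one, harmonic_succ]
    push_cast
    ring

lemma sum_neg_one_pow_mul_choose_div_add_one_sq (N : ℕ) :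
    ∑ k ∈ Finset.range (N + 1), (-1 : K) ^ k * ((N.choose k : K) / (k + 1) ^ 2) =
      (harmonic (N + 1) : K) / (N + 1) := by
  rw [← sum_neg_one_pow_mul_choose_succ_div_add_one, Finset.sum_div]
  refine Finset.sum_congr rfl fun k _ => ?_
  rw [sq, ← div_div, choose_div_add_one]
  ring

end AlternatingSums

section GammaIntegral

lemma integrableOn_rpow_mul_exp_neg_mul_Ioi {a r : ℝ} (ha : 0 < a) (hr : 0 < r) :
    IntegrableOn (fun t : ℝ => t ^ (a - 1) * rexp (-(r * t))) (Set.Ioi 0) := by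
  simpa using
    integrableOn_rpow_mul_exp_neg_mul_rpow (s := a - 1) (by linarith) one_pos hr

lemma norm_cpow_mul_exp_neg_mul {t : ℝ} (ht : 0 < t) (a r : ℂ) :
    ‖(t : ℂ) ^ (a - 1) * Complex.exp (-(r * t))‖ = t ^ (a.re - 1) * rexp (-(r.re * t)) := by
  rw [norm_mul, Complex.norm_cpow_eq_rpow_re_of_pos ht, Complex.norm_exp]
  simp

lemma integrableOn_cpow_mul_exp_neg_mul_Ioi {a r : ℂ} (ha : 0 < a.re) (hr : 0 < r.re) :
    IntegrableOn (fun t : ℝ => (t : ℂ) ^ (a - 1) * Complex.exp (-(r * t))) (Set.Ioi 0) := by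
  refine (integrableOn_rpow_mul_exp_neg_mul_Ioi ha hr).mono' (by fun_prop) ?_
  filter_upwards [ae_restrict_mem measurableSet_Ioi] with t ht
  exact (norm_cpow_mul_exp_neg_mul ht a r).le

lemma differentiableOn_integral_cpow_mul_exp_neg_mul_Ioi {a : ℂ} (ha : 0 < a.re) :
    DifferentiableOn ℂ
      (fun r : ℂ => ∫ t : ℝ in Set.Ioi 0, (t : ℂ) ^ (a - 1) * Complex.exp (-(r * t)))
      {r | 0 < r.re} := by
  intro r (hr : 0 < r.re)
  refine (hasDerivAt_integral_of_dominated_loc_of_deriv_le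
    (F := fun r (t : ℝ) => (t : ℂ) ^ (a - 1) * Complex.exp (-(r * t)))
    (F' := fun r (t : ℝ) => (t : ℂ) ^ (a - 1) * (Complex.exp (-(r * t)) * (-(1 * t))))
    (s := {z : ℂ | r.re / 2 < z.re})
    (bound := fun t : ℝ => t ^ ((a.re + 1) - 1) * rexp (-(r.re / 2 * t)))
    ((isOpen_lt continuous_const Complex.continuous_re).mem_nhds (half_lt_self hr))
    (.of_forall fun z => by fun_prop) (integrableOn_cpow_mul_exp_neg_mul_Ioi ha hr) (by fun_prop) ?_
    (integrableOn_rpow_mul_exp_neg_mul_Ioi (by linarith) (half_pos hr))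
    (.of_forall fun t z _ => ?_)).2.differentiableAt.differentiableWithinAt
  · filter_upwards [ae_restrict_mem measurableSet_Ioi] with t (ht : 0 < t) z (hz : r.re / 2 < z.re)
    rw [one_mul, ← mul_assoc, norm_mul, norm_cpow_mul_exp_neg_mul ht, norm_neg, Complex.norm_real,
      Real.norm_of_nonneg ht.le, add_sub_right_comm, rpow_add_one ht.ne', mul_right_comm]
    gcongr
  · exact ((hasDerivAt_id z).mul_const (t : ℂ)).neg.cexp.const_mul _

/-- Both sides are analytic in `r`, and for real `r` the identity is a rescaling of Euler's
integral. -/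
lemma integral_cpow_mul_exp_neg_mul_Ioi_of_re_pos {a r : ℂ} (ha : 0 < a.re) (hr : 0 < r.re) :
    ∫ t : ℝ in Set.Ioi 0, (t : ℂ) ^ (a - 1) * Complex.exp (-(r * t)) =
      r ^ (-a) * Complex.Gamma a := by
  have hopen : IsOpen {r : ℂ | 0 < r.re} := isOpen_lt continuous_const Complex.continuous_re
  have hR : DifferentiableOn ℂ (fun r : ℂ => r ^ (-a) * Complex.Gamma a) {r | 0 < r.re} :=
    fun r hr => ((differentiableAt_id.cpow_const (.inl hr)).mul_const _).differentiableWithinAt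
  have hreal : ∀ t : ℝ, 0 < t → ∫ u : ℝ in Set.Ioi 0, (u : ℂ) ^ (a - 1) * Complex.exp (-(t * u)) =
      (t : ℂ) ^ (-a) * Complex.Gamma a := fun t ht => by
    rw [Complex.integral_cpow_mul_exp_neg_mul_Ioi ha ht, one_div, Complex.cpow_neg,
      Complex.inv_cpow _ _ (by simpa [Complex.arg_ofReal_of_nonneg ht.le] using pi_ne_zero.symm)]
  have hlim : Tendsto (fun t : ℝ => (t : ℂ)) (nhdsWithin 1 {1}ᶜ) (nhdsWithin 1 {1}ᶜ) := by
    refine Complex.continuous_ofReal.continuousWithinAt.tendsto_nhdsWithin fun t ht => ?_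
    simpa using ht
  refine ((differentiableOn_integral_cpow_mul_exp_neg_mul_Ioi ha).analyticOnNhd
    hopen).eqOn_of_preconnected_of_frequently_eq (hR.analyticOnNhd hopen)
    (convex_halfSpace_re_gt 0).isPreconnected (z₀ := 1) (by simp) ?_ hr
  refine hlim.frequently (Eventually.frequently ?_)
  filter_upwards [nhdsWithin_le_nhds (lt_mem_nhds one_pos)] with t ht using hreal t ht

end GammaIntegral

section SineTransform

open Complex (I)

lemma exp_sub_one_pos {y : ℝ} (hy : 0 < y) : 0 < rexp y - 1 :=
  sub_pos.2 (one_lt_exp_iff.2 hy)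

lemma hasSum_exp_neg_add_one_mul {y : ℝ} (hy : 0 < y) :
    HasSum (fun m : ℕ => rexp (-((m + 1) * y))) (1 / (rexp y - 1)) := by
  have hgeom := (hasSum_geometric_of_lt_one (exp_nonneg (-y))
    (exp_lt_one_iff.2 (neg_lt_zero.2 hy))).mul_left (rexp (-y))
  have hvalue : rexp (-y) * (1 - rexp (-y))⁻¹ = 1 / (rexp y - 1) := by
    rw [Real.exp_neg, ← div_eq_mul_inv, div_eq_div_iff, one_mul, mul_sub, mul_one,
      inv_mul_cancel₀ (exp_ne_zero y)]
    · exact (sub_pos.2 (inv_lt_one_of_one_lt₀ (one_lt_exp_iff.2 hy))).ne'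
    · exact (exp_sub_one_pos hy).ne'
  rw [← hvalue]
  refine hgeom.congr_fun fun m => ?_
  rw [← Real.exp_nat_mul, ← Real.exp_add]
  ring_nf

lemma cotTerm_mul_I {y : ℝ} (hy : (y * I : ℂ) ∈ Complex.integerComplement) (m : ℕ) :
    cotTerm (y * I) m = -2 * I * ((y / ((m + 1) ^ 2 + y ^ 2) : ℝ) : ℂ) := by
  have hfactor : (y * I + (m + 1)) * (y * I - (m + 1)) = -((m + 1) ^ 2 + y ^ 2 : ℂ) := by
    linear_combination (y : ℂ) ^ 2 * Complex.I_sq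
  rw [cotTerm_identity hy, hfactor, one_div_neg_eq_neg_one_div]
  push_cast
  ring

lemma pi_mul_cot_pi_mul_I_sub {y : ℝ} (hy : 0 < y) :
    π * Complex.cot (π * (y * I)) - 1 / (y * I) =
      -2 * I * ((π / 2 + π / (rexp (2 * π * y) - 1) - 1 / (2 * y) : ℝ) : ℂ) := by
  have harg : 2 * π * I * (y * I) = -((2 * π * y : ℝ) : ℂ) := by
    push_cast
    linear_combination (2 * π * y : ℂ) * Complex.I_sq
  have hy' : (y : ℂ) ≠ 0 := by exact_mod_cast hy.ne'
  have hden : ((rexp (2 * π * y) : ℝ) : ℂ) - 1 ≠ 0 := by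
    exact_mod_cast (exp_sub_one_pos (by positivity : 0 < 2 * π * y)).ne'
  have hE : ((rexp (2 * π * y) : ℝ) : ℂ) ≠ 0 := by exact_mod_cast exp_ne_zero _
  rw [Complex.cot_pi_eq_exp_ratio, harg, Complex.exp_neg, ← Complex.ofReal_exp]
  push_cast [-Complex.ofReal_exp]
  generalize ((rexp (2 * π * y) : ℝ) : ℂ) = E at hden hE ⊢
  have hratio : (E⁻¹ + 1) / (I * (1 - E⁻¹)) = -I * (1 + 2 / (E - 1)) := by
    rw [show 1 - E⁻¹ = (E - 1) / E by field_simp]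
    field_simp
    linear_combination (E + 1) * Complex.I_sq
  rw [hratio, one_div, mul_inv, Complex.inv_I]
  field_simp
  ring

/-- The partial fraction expansion of the hyperbolic cotangent: the sum equals
`(π * coth (π * y) - 1 / y) / 2`. -/
lemma hasSum_div_add_one_sq_add_sq {y : ℝ} (hy : 0 < y) :
    HasSum (fun m : ℕ => y / ((m + 1) ^ 2 + y ^ 2))
      (π / 2 + π / (rexp (2 * π * y) - 1) - 1 / (2 * y)) := by
  have hmem : (y * I : ℂ) ∈ Complex.integerComplement := by
    rintro ⟨n, hn⟩
    simpa [hy.ne] using congrArg Complex.im hn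
  have hcot := (summable_cotTerm hmem).hasSum
  rw [← cot_series_rep' hmem, pi_mul_cot_pi_mul_I_sub hy] at hcot
  simp_rw [cotTerm_mul_I hmem] at hcot
  exact Complex.hasSum_ofReal.1 ((hasSum_mul_left_iff (by simp)).1 hcot)

lemma integrableOn_sin_mul_exp_neg_mul_Ioi (t : ℝ) {a : ℝ} (ha : 0 < a) :
    IntegrableOn (fun x : ℝ => sin (t * x) * rexp (-(a * x))) (Set.Ioi 0) := by
  have hexp : IntegrableOn (fun x : ℝ => rexp (-(a * x))) (Set.Ioi 0) := by
    simpa only [neg_mul] using exp_neg_integrableOn_Ioi 0 ha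
  exact hexp.bdd_mul (c := 1) (by fun_prop) (.of_forall fun x => abs_sin_le_one _)

lemma integral_sin_mul_exp_neg_mul_Ioi (t : ℝ) {a : ℝ} (ha : 0 < a) :
    ∫ x : ℝ in Set.Ioi 0, sin (t * x) * rexp (-(a * x)) = t / (a ^ 2 + t ^ 2) := by
  have hre : (-a + t * I : ℂ).re < 0 := by simpa
  have him : ∀ x : ℝ, (Complex.exp ((-a + t * I) * x)).im = sin (t * x) * rexp (-(a * x)) := by
    intro x
    simp [Complex.exp_im, mul_comm]
  calc ∫ x : ℝ in Set.Ioi 0, sin (t * x) * rexp (-(a * x))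
      = (∫ x : ℝ in Set.Ioi 0, Complex.exp ((-a + t * I) * x)).im := by
        simp_rw [← him]
        exact integral_im (integrableOn_exp_mul_complex_Ioi hre 0)
    _ = t / (a ^ 2 + t ^ 2) := by
        rw [integral_exp_mul_complex_Ioi hre]
        simp [Complex.div_im, Complex.normSq]
        ring

lemma integral_norm_sin_mul_exp_neg_mul_Ioi_le {t a : ℝ} (ht : 0 ≤ t) (ha : 0 < a) :
    ∫ x : ℝ in Set.Ioi 0, ‖sin (t * x) * rexp (-(a * x))‖ ≤ t / a ^ 2 := by
  calc ∫ x : ℝ in Set.Ioi 0, ‖sin (t * x) * rexp (-(a * x))‖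
      ≤ ∫ x : ℝ in Set.Ioi 0, t * (x ^ ((2 : ℝ) - 1) * rexp (-(a * x))) := by
        refine setIntegral_mono_on (integrableOn_sin_mul_exp_neg_mul_Ioi t ha).norm
          ((integrableOn_rpow_mul_exp_neg_mul_Ioi two_pos ha).const_mul t) measurableSet_Ioi
          fun x (hx : 0 < x) => ?_
        rw [norm_mul, norm_of_nonneg (exp_nonneg _), ← mul_assoc]
        gcongr
        calc ‖sin (t * x)‖ ≤ |t * x| := abs_sin_le_abs
          _ = t * x ^ ((2 : ℝ) - 1) := by
            rw [abs_of_nonneg (by positivity)]; norm_num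
    _ = t / a ^ 2 := by
        rw [integral_const_mul, Real.integral_rpow_mul_exp_neg_mul_Ioi two_pos ha, Gamma_two]
        norm_num [div_eq_mul_inv]

/-- Legendre's integral: expanding `1 / (exp (2 * π * x) - 1)` into exponentials and integrating
termwise produces the partial fractions of `coth (t / 2)`. -/
lemma integral_sin_mul_div_exp_two_pi_mul_sub_one {t : ℝ} (ht : 0 < t) :
    ∫ x : ℝ in Set.Ioi 0, sin (t * x) / (rexp (2 * π * x) - 1) =
      1 / 4 + 1 / (2 * (rexp t - 1)) - 1 / (2 * t) := by
  let f (m : ℕ) (x : ℝ) : ℝ := sin (t * x) * rexp (-(2 * π * (m + 1) * x))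
  have hint : ∀ m, ∫ x in Set.Ioi 0, f m x = 1 / (2 * π) *
      (t / (2 * π) / ((m + 1) ^ 2 + (t / (2 * π)) ^ 2)) := fun m => by
    rw [integral_sin_mul_exp_neg_mul_Ioi t (by positivity)]
    field_simp
  have hsummable : Summable fun m => ∫ x in Set.Ioi 0, ‖f m x‖ := by
    have hsq : Summable fun m : ℕ => t / (2 * π) ^ 2 * (1 / ((m + 1 : ℕ) : ℝ) ^ 2) :=
      ((summable_nat_add_iff 1).2 (summable_one_div_nat_pow.2 one_lt_two)).mul_left _
    refine hsq.of_nonneg_of_le (fun m => integral_nonneg fun _ => norm_nonneg _) fun m => ?_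
    refine (integral_norm_sin_mul_exp_neg_mul_Ioi_le ht.le (by positivity)).trans_eq ?_
    push_cast
    field_simp
  have hsum : ∀ x ∈ Set.Ioi (0 : ℝ), sin (t * x) / (rexp (2 * π * x) - 1) = ∑' m, f m x := by
    intro x (hx : 0 < x)
    rw [← mul_one_div, ← ((hasSum_exp_neg_add_one_mul (by positivity)).mul_left _).tsum_eq]
    exact tsum_congr fun m => by simp only [f]; ring_nf
  have hswap := hasSum_integral_of_summable_integral_norm (μ := volume.restrict (Set.Ioi 0))
    (F := f) (fun m => integrableOn_sin_mul_exp_neg_mul_Ioi t (by positivity)) hsummable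
  simp_rw [hint] at hswap
  rw [setIntegral_congr_fun measurableSet_Ioi hsum, hswap.unique
    ((hasSum_div_add_one_sq_add_sq (y := t / (2 * π)) (by positivity)).mul_left _),
    mul_div_cancel₀ t two_pi_pos.ne']
  have := (exp_sub_one_pos ht).ne'
  field_simp
  ring

end SineTransform

section AbelPlana

open Complex (I)

/-- The integrand `i (f(1 + ix) - f(1 - ix)) / (e^{2πx} - 1)` of the Abel–Plana formula
`∑_{n ≥ 1} f(n) = ∫_1^∞ f + f(1) / 2 + ∫_0^∞ abelPlanaKernel f`. -/
noncomputable def abelPlanaKernel (f : ℂ → ℂ) (x : ℝ) : ℂ :=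
  I * (f (1 + x * I) - f (1 - x * I)) / ((rexp (2 * π * x) - 1 : ℝ) : ℂ)

lemma measurable_abelPlanaKernel {f : ℂ → ℂ} (hf : Measurable f) :
    Measurable (abelPlanaKernel f) := by
  unfold abelPlanaKernel
  fun_prop

lemma abelPlanaKernel_sum_mul {ι : Type*} (s : Finset ι) (a : ι → ℂ) (f : ι → ℂ → ℂ) (x : ℝ) :
    abelPlanaKernel (fun z => ∑ i ∈ s, a i * f i z) x = ∑ i ∈ s, a i * abelPlanaKernel (f i) x := by
  simp only [abelPlanaKernel]
  rw [← Finset.sum_sub_distrib, Finset.mul_sum, Finset.sum_div]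
  exact Finset.sum_congr rfl fun i _ => by ring

lemma mul_exp_half_le_exp_sub_one {y : ℝ} (hy : 0 ≤ y) : y * rexp (y / 2) ≤ rexp y - 1 := by
  have hsinh : y / 2 ≤ sinh (y / 2) := self_le_sinh_iff.2 (by positivity)
  calc y * rexp (y / 2) = 2 * (y / 2) * rexp (y / 2) := by ring
    _ ≤ 2 * sinh (y / 2) * rexp (y / 2) := by gcongr
    _ = rexp (y / 2) * rexp (y / 2) - rexp (-(y / 2)) * rexp (y / 2) := by rw [sinh_eq]; ring
    _ = rexp y - 1 := by simp only [← Real.exp_add, add_halves, neg_add_cancel, Real.exp_zero]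

lemma div_exp_two_pi_mul_sub_one_le {x : ℝ} (hx : 0 < x) :
    x / (rexp (2 * π * x) - 1) ≤ rexp (-x) := by
  rw [div_le_iff₀ (exp_sub_one_pos (by positivity)), Real.exp_neg, le_inv_mul_iff₀ (exp_pos x)]
  calc rexp x * x ≤ rexp (2 * π * x / 2) * (2 * π * x) := by
        gcongr <;> nlinarith [pi_gt_three]
    _ ≤ rexp (2 * π * x) - 1 := by
        rw [mul_comm]
        exact mul_exp_half_le_exp_sub_one (by positivity)

lemma norm_abelPlanaKernel_le {f : ℂ → ℂ} {C x : ℝ} (hx : 0 < x)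
    (hf : ‖f (1 + x * I) - f (1 - x * I)‖ ≤ C * x) :
    ‖abelPlanaKernel f x‖ ≤ C * rexp (-x) := by
  have hC : 0 ≤ C := nonneg_of_mul_nonneg_left ((norm_nonneg _).trans hf) hx
  have hden : 0 < rexp (2 * π * x) - 1 := exp_sub_one_pos (by positivity)
  calc ‖abelPlanaKernel f x‖ = ‖f (1 + x * I) - f (1 - x * I)‖ / (rexp (2 * π * x) - 1) := by
        rw [abelPlanaKernel, norm_div, norm_mul, Complex.norm_I, one_mul, Complex.norm_real,
          norm_of_nonneg hden.le]
    _ ≤ C * x / (rexp (2 * π * x) - 1) := by gcongr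
    _ = C * (x / (rexp (2 * π * x) - 1)) := mul_div_assoc _ _ _
    _ ≤ C * rexp (-x) := by
        gcongr
        exact div_exp_two_pi_mul_sub_one_le hx

end AbelPlana

section Exponential

open Complex (I)

lemma exp_neg_one_add_sub_exp_neg_one_sub (t x : ℝ) :
    Complex.exp (-((1 + x * I) * t)) - Complex.exp (-((1 - x * I) * t)) =
      -2 * I * ((rexp (-t) * sin (t * x) : ℝ) : ℂ) := by
  have hadd : -((1 + x * I) * t) = -t + -(t * x) * I := by ring
  have hsub : -((1 - x * I) * t) = -t + t * x * I := by ring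
  rw [hadd, hsub, Complex.exp_add, Complex.exp_add, Complex.exp_mul_I, Complex.exp_mul_I,
    Complex.cos_neg, Complex.sin_neg]
  push_cast
  ring

lemma abelPlanaKernel_exp (t x : ℝ) :
    abelPlanaKernel (fun z => Complex.exp (-(z * t))) x =
      ((2 * rexp (-t) * (sin (t * x) / (rexp (2 * π * x) - 1)) : ℝ) : ℂ) := by
  rw [abelPlanaKernel, exp_neg_one_add_sub_exp_neg_one_sub, ← mul_assoc,
    show I * (-2 * I) = 2 by linear_combination (-2 : ℂ) * Complex.I_sq]
  push_cast
  ring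

lemma norm_abelPlanaKernel_exp_le {t x : ℝ} (ht : 0 < t) (hx : 0 < x) :
    ‖abelPlanaKernel (fun z => Complex.exp (-(z * t))) x‖ ≤ 2 * (t * rexp (-t)) * rexp (-x) := by
  refine norm_abelPlanaKernel_le hx ?_
  calc ‖Complex.exp (-((1 + x * I) * t)) - Complex.exp (-((1 - x * I) * t))‖
      = 2 * (rexp (-t) * |sin (t * x)|) := by
        rw [exp_neg_one_add_sub_exp_neg_one_sub, norm_mul, norm_mul, norm_neg, Complex.norm_ofNat,
          Complex.norm_I, mul_one, Complex.norm_real, norm_eq_abs, abs_mul,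
          abs_of_pos (exp_pos (-t))]
    _ ≤ 2 * (rexp (-t) * |t * x|) := mul_le_mul_of_nonneg_left
        (mul_le_mul_of_nonneg_left abs_sin_le_abs (exp_nonneg _)) zero_le_two
    _ = 2 * (t * rexp (-t)) * x := by rw [abs_of_pos (by positivity)]; ring

/-- The Abel–Plana formula for `f z = exp (-t * z)`: the first term on the right is
`∑_{n ≥ 1} f n`, the second is `f 1 / 2`, and the last is `∫_1^∞ f`. -/
lemma integral_abelPlanaKernel_exp {t : ℝ} (ht : 0 < t) :
    ∫ x : ℝ in Set.Ioi 0, abelPlanaKernel (fun z => Complex.exp (-(z * t))) x =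
      ((1 / (rexp t - 1) - rexp (-t) / 2 - rexp (-t) / t : ℝ) : ℂ) := by
  have hden : rexp t - 1 ≠ 0 := (exp_sub_one_pos ht).ne'
  simp_rw [abelPlanaKernel_exp]
  rw [integral_complex_ofReal, integral_const_mul, integral_sin_mul_div_exp_two_pi_mul_sub_one ht,
    Real.exp_neg]
  congr 1
  field_simp
  ring

lemma integral_cpow_mul_abelPlanaKernel_exp {s : ℂ} (hs : 0 < s.re) (x : ℝ) :
    ∫ t : ℝ in Set.Ioi 0,
        (t : ℂ) ^ (s - 1) * abelPlanaKernel (fun z => Complex.exp (-(z * t))) x =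
      Complex.Gamma s * abelPlanaKernel (fun z => z ^ (-s)) x := by
  have hadd : 0 < (1 + x * I : ℂ).re := by simp
  have hsub : 0 < (1 - x * I : ℂ).re := by simp
  simp only [abelPlanaKernel]
  rw [mul_div_assoc', mul_left_comm, mul_sub, mul_comm _ ((1 + x * I : ℂ) ^ (-s)),
    mul_comm _ ((1 - x * I : ℂ) ^ (-s)), ← integral_cpow_mul_exp_neg_mul_Ioi_of_re_pos hs hadd,
    ← integral_cpow_mul_exp_neg_mul_Ioi_of_re_pos hs hsub,
    ← integral_sub (integrableOn_cpow_mul_exp_neg_mul_Ioi hs hadd)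
      (integrableOn_cpow_mul_exp_neg_mul_Ioi hs hsub), ← integral_const_mul, ← integral_div]
  congr 1 with t
  ring

end Exponential

section Zeta

lemma integrableOn_cpow_mul_one_div_exp_sub_one {s : ℂ} (hs : 1 < s.re) :
    IntegrableOn (fun t : ℝ => (t : ℂ) ^ (s - 1) * ((1 / (rexp t - 1) : ℝ) : ℂ)) (Set.Ioi 0) := by
  refine (integrableOn_rpow_mul_exp_neg_mul_Ioi (sub_pos.2 hs) one_half_pos).mono' (by fun_prop) ?_
  filter_upwards [ae_restrict_mem measurableSet_Ioi] with t (ht : 0 < t)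
  have hden : 0 < rexp t - 1 := exp_sub_one_pos ht
  have hexp : 1 / (rexp t - 1) ≤ t⁻¹ * rexp (-(1 / 2 * t)) := by
    rw [one_div, Real.exp_neg, ← mul_inv, one_div_mul_eq_div]
    exact inv_anti₀ (by positivity) (mul_exp_half_le_exp_sub_one ht.le)
  calc ‖(t : ℂ) ^ (s - 1) * ((1 / (rexp t - 1) : ℝ) : ℂ)‖
      = t ^ (s.re - 1) * (1 / (rexp t - 1)) := by
        rw [norm_mul, Complex.norm_cpow_eq_rpow_re_of_pos ht, Complex.norm_real,
          norm_of_nonneg (by positivity), Complex.sub_re, Complex.one_re]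
    _ ≤ t ^ (s.re - 1) * (t⁻¹ * rexp (-(1 / 2 * t))) := by gcongr
    _ = t ^ (s.re - 1 - 1) * rexp (-(1 / 2 * t)) := by
        rw [rpow_sub_one ht.ne' (s.re - 1), ← mul_assoc, ← div_eq_mul_inv]

lemma integral_cpow_mul_one_div_exp_sub_one {s : ℂ} (hs : 1 < s.re) :
    ∫ t : ℝ in Set.Ioi 0, (t : ℂ) ^ (s - 1) * ((1 / (rexp t - 1) : ℝ) : ℂ) =
      Complex.Gamma s * riemannZeta s := by
  have hsummable : Summable fun m : ℕ => ‖(1 : ℂ)‖ / (m + 1 : ℝ) ^ s.re := by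
    simpa using (summable_nat_add_iff 1).2 (summable_one_div_nat_rpow.2 hs)
  have hgeom : ∀ t ∈ Set.Ioi (0 : ℝ), HasSum (fun m : ℕ => 1 * (rexp (-(m + 1) * t) : ℂ))
      ((1 / (rexp t - 1) : ℝ) : ℂ) := fun t ht => by
    simpa only [one_mul, neg_mul] using Complex.hasSum_ofReal.2 (hasSum_exp_neg_add_one_mul ht)
  have hmellin := hasSum_mellin (p := fun m : ℕ => (m + 1 : ℝ)) (fun m => .inr (by positivity))
    (one_pos.trans hs) hgeom hsummable
  calc ∫ t : ℝ in Set.Ioi 0, (t : ℂ) ^ (s - 1) * ((1 / (rexp t - 1) : ℝ) : ℂ)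
      = ∑' m : ℕ, Complex.Gamma s * 1 / ((m + 1 : ℝ) : ℂ) ^ s := hmellin.tsum_eq.symm
    _ = Complex.Gamma s * riemannZeta s := by
        rw [zeta_eq_tsum_one_div_nat_add_one_cpow hs, ← tsum_mul_left]
        simp [div_eq_mul_inv]

lemma integral_cpow_mul_integral_abelPlanaKernel_exp {s : ℂ} (hs : 1 < s.re) :
    ∫ t : ℝ in Set.Ioi 0, (t : ℂ) ^ (s - 1) *
        ∫ x : ℝ in Set.Ioi 0, abelPlanaKernel (fun z => Complex.exp (-(z * t))) x =
      Complex.Gamma s * (riemannZeta s - 1 / 2 - 1 / (s - 1)) := by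
  have hs₀ : 0 < s.re := one_pos.trans hs
  have hs₁ : 0 < (s - 1).re := by simpa using hs
  have hne : s - 1 ≠ 0 := fun h => by simp [h] at hs₁
  have hGamma : Complex.Gamma s = (s - 1) * Complex.Gamma (s - 1) := by
    rw [← Complex.Gamma_add_one _ hne, sub_add_cancel]
  have hone : 0 < (1 : ℂ).re := by simp
  have hsplit : ∀ t ∈ Set.Ioi (0 : ℝ), (t : ℂ) ^ (s - 1) *
      ∫ x : ℝ in Set.Ioi 0, abelPlanaKernel (fun z => Complex.exp (-(z * t))) x =
      (t : ℂ) ^ (s - 1) * ((1 / (rexp t - 1) : ℝ) : ℂ) -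
        (t : ℂ) ^ (s - 1) * Complex.exp (-(1 * t)) / 2 -
        (t : ℂ) ^ (s - 1 - 1) * Complex.exp (-(1 * t)) := fun t ht => by
    rw [integral_abelPlanaKernel_exp ht,
      Complex.cpow_sub (s - 1) 1 (Complex.ofReal_ne_zero.2 (ne_of_gt ht)), Complex.cpow_one,
      one_mul]
    push_cast
    ring
  rw [setIntegral_congr_fun measurableSet_Ioi hsplit, integral_sub, integral_sub, integral_div,
    integral_cpow_mul_one_div_exp_sub_one hs, integral_cpow_mul_exp_neg_mul_Ioi_of_re_pos hs₀ hone,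
    integral_cpow_mul_exp_neg_mul_Ioi_of_re_pos hs₁ hone, hGamma]
  · simp only [Complex.one_cpow]
    field_simp
  · exact integrableOn_cpow_mul_one_div_exp_sub_one hs
  · exact (integrableOn_cpow_mul_exp_neg_mul_Ioi hs₀ hone).div_const 2
  · exact (integrableOn_cpow_mul_one_div_exp_sub_one hs).sub
      ((integrableOn_cpow_mul_exp_neg_mul_Ioi hs₀ hone).div_const 2)
  · exact integrableOn_cpow_mul_exp_neg_mul_Ioi hs₁ hone

lemma integrable_cpow_mul_abelPlanaKernel_exp {s : ℂ} (hs : -1 < s.re) :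
    Integrable (fun p : ℝ × ℝ =>
        (p.2 : ℂ) ^ (s - 1) * abelPlanaKernel (fun z => Complex.exp (-(z * p.2))) p.1)
      ((volume.restrict (Set.Ioi 0)).prod (volume.restrict (Set.Ioi 0))) := by
  have hexp : IntegrableOn (fun x : ℝ => rexp (-x)) (Set.Ioi 0) := integrableOn_exp_neg_Ioi 0
  have hpow : IntegrableOn (fun t : ℝ => 2 * (t ^ (s.re + 1 - 1) * rexp (-(1 * t)))) (Set.Ioi 0) :=
    (integrableOn_rpow_mul_exp_neg_mul_Ioi (by linarith) one_pos).const_mul 2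
  refine (hexp.mul_prod hpow).mono' ?_ ?_
  · simp only [abelPlanaKernel]
    fun_prop
  rw [Measure.prod_restrict]
  filter_upwards [ae_restrict_mem (measurableSet_Ioi.prod measurableSet_Ioi)]
    with ⟨x, t⟩ ⟨(hx : 0 < x), (ht : 0 < t)⟩
  calc ‖(t : ℂ) ^ (s - 1) * abelPlanaKernel (fun z => Complex.exp (-(z * t))) x‖
      ≤ t ^ (s.re - 1) * (2 * (t * rexp (-t)) * rexp (-x)) := by
        rw [norm_mul, Complex.norm_cpow_eq_rpow_re_of_pos ht, Complex.sub_re, Complex.one_re]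
        gcongr
        exact norm_abelPlanaKernel_exp_le ht hx
    _ = rexp (-x) * (2 * (t ^ (s.re + 1 - 1) * rexp (-(1 * t)))) := by
        rw [add_sub_right_comm, rpow_add_one ht.ne', one_mul]
        ring

lemma integral_abelPlanaKernel_cpow_of_one_lt_re {s : ℂ} (hs : 1 < s.re) :
    ∫ x : ℝ in Set.Ioi 0, abelPlanaKernel (fun z => z ^ (-s)) x =
      riemannZeta s - 1 / 2 - 1 / (s - 1) := by
  have hs₀ : 0 < s.re := one_pos.trans hs
  apply mul_left_cancel₀ (Complex.Gamma_ne_zero_of_re_pos hs₀)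
  rw [← integral_cpow_mul_integral_abelPlanaKernel_exp hs, ← integral_const_mul]
  simp_rw [← integral_cpow_mul_abelPlanaKernel_exp hs₀, ← integral_const_mul]
  exact integral_integral_swap (integrable_cpow_mul_abelPlanaKernel_exp (by linarith))

end Zeta

section ComplexPower

open Complex (I)

lemma one_add_ofReal_mul_I_mem_slitPlane (x : ℝ) : 1 + x * I ∈ Complex.slitPlane :=
  .inl (by simp)

lemma one_sub_ofReal_mul_I_mem_slitPlane (x : ℝ) : 1 - x * I ∈ Complex.slitPlane :=
  .inl (by simp)

lemma arg_eq_arctan_of_re_pos {z : ℂ} (hz : 0 < z.re) : Complex.arg z = arctan (z.im / z.re) := by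
  have harg := abs_lt.1 (Complex.abs_arg_lt_pi_div_two_iff.2 (.inl hz))
  rw [← Complex.tan_arg, arctan_tan harg.1 harg.2]

lemma log_one_add_sub_log_one_sub_mul_I (x : ℝ) :
    Complex.log (1 + x * I) - Complex.log (1 - x * I) = 2 * arctan x * I := by
  have harg : Complex.arg (1 + x * I) = arctan x := by
    simpa using arg_eq_arctan_of_re_pos (z := 1 + x * I) (by simp)
  have hconj : (1 - x * I : ℂ) = (starRingEnd ℂ) (1 + x * I) := by
    simp [sub_eq_add_neg]
  rw [hconj, Complex.log_conj _ (Complex.slitPlane_arg_ne_pi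
    (one_add_ofReal_mul_I_mem_slitPlane x)), Complex.sub_conj, Complex.log_im, harg]
  push_cast
  ring

lemma norm_log_one_add_le_norm {z : ℂ} (hz : 0 ≤ z.re) : ‖Complex.log (1 + z)‖ ≤ ‖z‖ := by
  have hre : ∀ w : ℂ, 0 ≤ w.re → 1 ≤ (1 + w).re := fun w hw => by simpa
  have hderiv : ∀ w ∈ {w : ℂ | 0 ≤ w.re}, HasDerivWithinAt (fun w => Complex.log (1 + w))
      (1 / (1 + w)) {w | 0 ≤ w.re} w := fun w hw =>
    (((hasDerivAt_id w).const_add 1).clog (.inl (one_pos.trans_le (hre w hw)))).hasDerivWithinAt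
  have hbound : ∀ w ∈ {w : ℂ | 0 ≤ w.re}, ‖1 / (1 + w)‖ ≤ 1 := fun w hw => by
    rw [norm_div, norm_one]
    exact div_le_one_of_le₀ ((hre w hw).trans (Complex.re_le_norm _)) (norm_nonneg _)
  simpa using (convex_halfSpace_re_ge 0).norm_image_sub_le_of_norm_hasDerivWithin_le hderiv hbound
    (x := 0) (by simp) hz

lemma norm_cpow_le_pow_mul_exp {z s : ℂ} {N : ℕ} (hz : 1 ≤ ‖z‖) (hs : ‖s‖ ≤ N) :
    ‖z ^ s‖ ≤ ‖z‖ ^ N * rexp (π * N) := by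
  have hz₀ : z ≠ 0 := norm_pos_iff.1 (one_pos.trans_le hz)
  have harg : -(Complex.arg z * s.im) ≤ π * N := calc
    -(Complex.arg z * s.im) ≤ |Complex.arg z| * |s.im| := by
      rw [← abs_mul]; exact neg_le_abs _
    _ ≤ π * N := mul_le_mul (Complex.abs_arg_le_pi z) ((Complex.abs_im_le_norm s).trans hs)
      (abs_nonneg _) pi_nonneg
  rw [Complex.norm_cpow_of_ne_zero hz₀, div_eq_mul_inv, ← Real.exp_neg, ← rpow_natCast]
  gcongr
  exact (Complex.re_le_norm s).trans hs

end ComplexPower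

section Derivative

open Complex (I)

lemma norm_one_add_mul_I_cpow_mul_log_le {s : ℂ} {N : ℕ} (hs : ‖s‖ ≤ N) (x : ℝ) :
    ‖(1 + x * I) ^ s * Complex.log (1 + x * I)‖ ≤ (1 + |x|) ^ N * rexp (π * N) * |x| := by
  have hre : (1 : ℝ) = (1 + x * I : ℂ).re := by simp
  have hnorm : ‖(1 + x * I : ℂ)‖ ≤ 1 + |x| := by
    simpa using norm_add_le (1 : ℂ) (x * I)
  have hlog : ‖Complex.log (1 + x * I)‖ ≤ |x| := by
    simpa using norm_log_one_add_le_norm (z := x * I) (by simp)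
  rw [norm_mul]
  gcongr
  exact (norm_cpow_le_pow_mul_exp (hre.le.trans (Complex.re_le_norm _)) hs).trans (by gcongr)

lemma norm_abelPlanaKernel_cpow_mul_log_le {s : ℂ} {N : ℕ} (hs : ‖s‖ ≤ N) {x : ℝ} (hx : 0 < x) :
    ‖abelPlanaKernel (fun z => z ^ (-s) * Complex.log z) x‖ ≤
      2 * ((1 + x) ^ N * rexp (π * N)) * rexp (-x) := by
  have hs' : ‖-s‖ ≤ N := by rwa [norm_neg]
  have hadd := norm_one_add_mul_I_cpow_mul_log_le hs' x
  have hsub := norm_one_add_mul_I_cpow_mul_log_le hs' (-x)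
  rw [Complex.ofReal_neg, neg_mul, ← sub_eq_add_neg, abs_neg] at hsub
  rw [abs_of_pos hx] at hadd hsub
  exact norm_abelPlanaKernel_le hx
    ((norm_sub_le_of_le hadd hsub).trans_eq (by ring))

lemma integrableOn_one_add_pow_mul_exp_neg_Ioi (N : ℕ) :
    IntegrableOn (fun x : ℝ => (1 + x) ^ N * rexp (-x)) (Set.Ioi 0) := by
  have hterm : ∀ k : ℕ, IntegrableOn (fun x : ℝ => x ^ k * rexp (-x)) (Set.Ioi 0) := fun k => by
    simpa [mul_comm] using
      integrableOn_rpow_mul_exp_neg_mul_Ioi (a := k + 1) (r := 1) (by positivity) one_pos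
  simp_rw [add_comm (1 : ℝ), add_pow, one_pow, mul_one, Finset.sum_mul]
  exact integrable_finsetSum _ fun k _ =>
    ((hterm k).mul_const (N.choose k : ℝ)).congr (.of_forall fun x => by ring)

lemma hasDerivAt_abelPlanaKernel_cpow (s : ℂ) (x : ℝ) :
    HasDerivAt (fun s => abelPlanaKernel (fun z => z ^ (-s)) x)
      (-abelPlanaKernel (fun z => z ^ (-s) * Complex.log z) x) s := by
  have hcpow : ∀ z ∈ Complex.slitPlane,
      HasDerivAt (fun s => z ^ (-s)) (z ^ (-s) * Complex.log z * -1) s := fun z hz =>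
    (hasDerivAt_neg s).const_cpow (.inl (Complex.slitPlane_ne_zero hz))
  have h := (((hcpow _ (one_add_ofReal_mul_I_mem_slitPlane x)).sub
    (hcpow _ (one_sub_ofReal_mul_I_mem_slitPlane x))).const_mul I).div_const
    ((rexp (2 * π * x) - 1 : ℝ) : ℂ)
  refine h.congr_deriv ?_
  simp only [abelPlanaKernel]
  ring

lemma abelPlanaKernel_one (x : ℝ) : abelPlanaKernel (fun _ => 1) x = 0 := by
  simp [abelPlanaKernel]

lemma norm_abelPlanaKernel_cpow_le {s : ℂ} {N : ℕ} (hs : ‖s‖ ≤ N) {x : ℝ} (hx : 0 < x) :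
    ‖abelPlanaKernel (fun z => z ^ (-s)) x‖ ≤
      2 * ((1 + x) ^ N * rexp (π * N)) * rexp (-x) * N := by
  have hmvt := (convex_closedBall (0 : ℂ) (N : ℝ)).norm_image_sub_le_of_norm_hasDerivWithin_le
    (fun w _ => (hasDerivAt_abelPlanaKernel_cpow w x).hasDerivWithinAt)
    (fun w hw => (norm_neg _).trans_le
      (norm_abelPlanaKernel_cpow_mul_log_le (mem_closedBall_zero_iff.1 hw) hx))
    (Metric.mem_closedBall_self N.cast_nonneg) (mem_closedBall_zero_iff.2 hs)
  simp only [neg_zero, Complex.cpow_zero, abelPlanaKernel_one, sub_zero] at hmvt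
  exact hmvt.trans (by gcongr)

lemma integrableOn_abelPlanaKernel_cpow (s : ℂ) :
    IntegrableOn (abelPlanaKernel fun z => z ^ (-s)) (Set.Ioi 0) := by
  obtain ⟨N, hN⟩ := exists_nat_ge ‖s‖
  refine ((integrableOn_one_add_pow_mul_exp_neg_Ioi N).const_mul
    (2 * rexp (π * N) * N)).mono' (measurable_abelPlanaKernel (by fun_prop)).aestronglyMeasurable ?_
  filter_upwards [ae_restrict_mem measurableSet_Ioi] with x hx
  exact (norm_abelPlanaKernel_cpow_le hN hx).trans_eq (by ring)

lemma integrableOn_abelPlanaKernel_cpow_mul_log (s : ℂ) :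
    IntegrableOn (abelPlanaKernel fun z => z ^ (-s) * Complex.log z) (Set.Ioi 0) := by
  obtain ⟨N, hN⟩ := exists_nat_ge ‖s‖
  refine ((integrableOn_one_add_pow_mul_exp_neg_Ioi N).const_mul
    (2 * rexp (π * N))).mono' (measurable_abelPlanaKernel (by fun_prop)).aestronglyMeasurable ?_
  filter_upwards [ae_restrict_mem measurableSet_Ioi] with x hx
  exact (norm_abelPlanaKernel_cpow_mul_log_le hN hx).trans_eq (by ring)

lemma hasDerivAt_integral_abelPlanaKernel_cpow (s : ℂ) :
    HasDerivAt (fun s => ∫ x : ℝ in Set.Ioi 0, abelPlanaKernel (fun z => z ^ (-s)) x)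
      (-∫ x : ℝ in Set.Ioi 0, abelPlanaKernel (fun z => z ^ (-s) * Complex.log z) x) s := by
  obtain ⟨N, hN⟩ := exists_nat_gt ‖s‖
  rw [← integral_neg]
  refine (hasDerivAt_integral_of_dominated_loc_of_deriv_le
    (F := fun s => abelPlanaKernel fun z => z ^ (-s))
    (F' := fun s x => -abelPlanaKernel (fun z => z ^ (-s) * Complex.log z) x)
    (bound := fun x => 2 * rexp (π * N) * ((1 + x) ^ N * rexp (-x)))
    (Metric.isOpen_ball.mem_nhds (mem_ball_zero_iff.2 hN))
    (.of_forall fun w => (integrableOn_abelPlanaKernel_cpow w).aestronglyMeasurable)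
    (integrableOn_abelPlanaKernel_cpow s)
    (integrableOn_abelPlanaKernel_cpow_mul_log s).neg.aestronglyMeasurable ?_
    ((integrableOn_one_add_pow_mul_exp_neg_Ioi N).const_mul _)
    (.of_forall fun x w _ => hasDerivAt_abelPlanaKernel_cpow w x)).2
  filter_upwards [ae_restrict_mem measurableSet_Ioi] with x hx w hw
  rw [norm_neg]
  exact (norm_abelPlanaKernel_cpow_mul_log_le (mem_ball_zero_iff.1 hw).le hx).trans_eq (by ring)

end Derivative

section ZetaDerivative

open Complex (I)

/-- Hermite's formula; it is the Abel–Plana formula for `f z = z ^ (-s)` when `1 < s.re`, and both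
sides are analytic in `s`. -/
lemma riemannZeta_eq_integral_abelPlanaKernel_cpow {s : ℂ} (hs : s ≠ 1) :
    riemannZeta s =
      (∫ x : ℝ in Set.Ioi 0, abelPlanaKernel (fun z => z ^ (-s)) x) + 1 / 2 + (s - 1)⁻¹ := by
  have hzeta : DifferentiableOn ℂ riemannZeta {1}ᶜ := fun w hw =>
    (differentiableAt_riemannZeta hw).differentiableWithinAt
  have hright : DifferentiableOn ℂ (fun s : ℂ => (∫ x : ℝ in Set.Ioi 0,
      abelPlanaKernel (fun z => z ^ (-s)) x) + 1 / 2 + (s - 1)⁻¹) {1}ᶜ := fun w hw => by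
    have hpole : DifferentiableAt ℂ (fun s : ℂ => (s - 1)⁻¹) w :=
      (differentiableAt_fun_id.sub_const 1).fun_inv (sub_ne_zero.2 (by simpa using hw))
    exact (((hasDerivAt_integral_abelPlanaKernel_cpow w).differentiableAt.add_const
      (1 / 2)).fun_add hpole).differentiableWithinAt
  refine (hzeta.analyticOnNhd isOpen_compl_singleton).eqOn_of_preconnected_of_eventuallyEq
    (hright.analyticOnNhd isOpen_compl_singleton)
    (isConnected_compl_singleton_of_one_lt_rank (by simp) 1).isPreconnected
    (z₀ := 2) (by simp) ?_ hs
  filter_upwards [(isOpen_lt continuous_const Complex.continuous_re).mem_nhds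
    (by simp : (1 : ℝ) < (2 : ℂ).re)] with w hw
  rw [integral_abelPlanaKernel_cpow_of_one_lt_re hw]
  ring

lemma deriv_riemannZeta_eq_integral_abelPlanaKernel {s : ℂ} (hs : s ≠ 1) :
    deriv riemannZeta s =
      -(∫ x : ℝ in Set.Ioi 0, abelPlanaKernel (fun z => z ^ (-s) * Complex.log z) x) -
        1 / (s - 1) ^ 2 := by
  have hlocal : riemannZeta =ᶠ[nhds s] fun s =>
      (∫ x : ℝ in Set.Ioi 0, abelPlanaKernel (fun z => z ^ (-s)) x) + 1 / 2 + (s - 1)⁻¹ := by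
    filter_upwards [isOpen_compl_singleton.mem_nhds hs] with w hw
    exact riemannZeta_eq_integral_abelPlanaKernel_cpow hw
  have hderiv := ((hasDerivAt_integral_abelPlanaKernel_cpow s).add_const (1 / 2 : ℂ)).add
    (((hasDerivAt_id s).sub_const 1).inv (sub_ne_zero.2 hs))
  rw [hlocal.deriv_eq]
  exact hderiv.deriv.trans (by rw [id, neg_div, ← sub_eq_add_neg])

lemma integrableOn_abelPlanaKernel_pow_mul_log (k : ℕ) :
    IntegrableOn (abelPlanaKernel fun z => z ^ k * Complex.log z) (Set.Ioi 0) := by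
  simpa only [neg_neg, Complex.cpow_natCast] using
    integrableOn_abelPlanaKernel_cpow_mul_log (-(k : ℂ))

lemma deriv_riemannZeta_neg_natCast (k : ℕ) :
    deriv riemannZeta (-(k : ℂ)) =
      -(∫ x : ℝ in Set.Ioi 0, abelPlanaKernel (fun z => z ^ k * Complex.log z) x) -
        1 / (k + 1) ^ 2 := by
  have hk : (-k : ℂ) ≠ 1 := fun h =>
    k.cast_add_one_ne_zero (R := ℂ) (by linear_combination -h)
  rw [deriv_riemannZeta_eq_integral_abelPlanaKernel hk,
    show (-(k : ℂ) - 1) ^ 2 = (k + 1) ^ 2 by ring]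
  simp only [neg_neg, Complex.cpow_natCast]

lemma sum_neg_one_pow_mul_choose_mul_abelPlanaKernel (N : ℕ) (x : ℝ) :
    ∑ k ∈ Finset.range (N + 1), (-1 : ℂ) ^ k * N.choose k *
        abelPlanaKernel (fun z => z ^ k * Complex.log z) x =
      abelPlanaKernel (fun z => (1 - z) ^ N * Complex.log z) x := by
  have hbinom : ∀ z : ℂ, (1 - z) ^ N * Complex.log z = ∑ k ∈ Finset.range (N + 1),
      (-1 : ℂ) ^ k * N.choose k * (z ^ k * Complex.log z) := fun z => by
    rw [sub_eq_neg_add, add_pow, Finset.sum_mul]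
    refine Finset.sum_congr rfl fun k _ => ?_
    rw [neg_pow, one_pow]
    ring
  simp_rw [hbinom, abelPlanaKernel_sum_mul]

lemma sum_neg_one_pow_mul_choose_mul_deriv_riemannZeta_neg (N : ℕ) :
    ∑ k ∈ Finset.range (N + 1), (-1 : ℂ) ^ k * N.choose k * deriv riemannZeta (-(k : ℂ)) =
      -(∫ x : ℝ in Set.Ioi 0, abelPlanaKernel (fun z => (1 - z) ^ N * Complex.log z) x) -
        (harmonic (N + 1) : ℂ) / (N + 1) := by
  simp_rw [← sum_neg_one_pow_mul_choose_mul_abelPlanaKernel]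
  rw [integral_finsetSum _ fun (k : ℕ) _ =>
    (integrableOn_abelPlanaKernel_pow_mul_log k).const_mul _,
    ← sum_neg_one_pow_mul_choose_div_add_one_sq, ← Finset.sum_neg_distrib,
    ← Finset.sum_sub_distrib]
  refine Finset.sum_congr rfl fun k _ => ?_
  rw [deriv_riemannZeta_neg_natCast, integral_const_mul]
  ring

lemma abelPlanaKernel_one_sub_pow_even_mul_log (n : ℕ) (x : ℝ) :
    abelPlanaKernel (fun z => (1 - z) ^ (2 * n) * Complex.log z) x =
      -(2 * (-1) ^ n * ((x ^ (2 * n) * arctan x / (rexp (2 * π * x) - 1) : ℝ) : ℂ)) := by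
  have hpow : (-(x * I)) ^ (2 * n) = (-1) ^ n * (x : ℂ) ^ (2 * n) := by
    rw [(even_two_mul n).neg_pow, mul_pow, pow_mul I, Complex.I_sq, mul_comm]
  rw [abelPlanaKernel, sub_add_cancel_left, sub_sub_cancel, ← (even_two_mul n).neg_pow (x * I),
    ← mul_sub, log_one_add_sub_log_one_sub_mul_I, hpow]
  push_cast
  linear_combination (2 * (-1) ^ n * x ^ (2 * n) * Complex.arctan x / (Complex.exp (2 * π * x) - 1))
    * Complex.I_sq

end ZetaDerivative

/-- 2(−1)ⁿ ∫₀^∞ x^{2n} arctan x/(e^{2πx}−1) dx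
    = H_{2n+1}/(2n+1) + ∑_{k=0}^{2n} (−1)^k C(2n,k) ζ'(−k). -/
theorem integral_pow_arctan_eq (n : ℕ) (hn : 1 ≤ n) :
    2 * (-1 : ℂ) ^ n *
        ((∫ x in Set.Ioi (0 : ℝ),
            x ^ (2 * n) * Real.arctan x / (Real.exp (2 * π * x) - 1) : ℝ) : ℂ) =
      (harmonic (2 * n + 1) : ℂ) / (2 * (n : ℂ) + 1)
        + ∑ k ∈ Finset.range (2 * n + 1),
            (-1 : ℂ) ^ k * (Nat.choose (2 * n) k : ℂ) * deriv riemannZeta (-(k : ℂ)) := by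
  have hcast : ((2 * n : ℕ) : ℂ) = 2 * n := by push_cast; rfl
  rw [sum_neg_one_pow_mul_choose_mul_deriv_riemannZeta_neg, hcast, add_sub_cancel]
  simp_rw [abelPlanaKernel_one_sub_pow_even_mul_log]
  rw [integral_neg, neg_neg, integral_const_mul, integral_complex_ofReal]
end

section
/- For every integer n ≥ 1, (−1)ⁿ ∫₀^∞ x^{2n−1}·log(1 + x²)/(e^{2πx} − 1) dx = H_{2n}/(2n) + ∑_{k=0}^{2n−1} (−1)^k · C(2n−1, k) · ζ'(−k), where H_p = ∑_{j=1}^p 1/j is the p-th harmonic number, C(n,k) is the binomial coefficient, and ζ' the derivative of the Riemann zeta function. -/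
open Real MeasureTheory Filter

/-! By the Lipschitz formula, `∑ w ^ m exp (-w t)` over `w ∈ ℕ` equals
`m! ∑ 1 / (t + 2 π i k) ^ (m + 1)` over `k ∈ ℤ`, where the terms with `k ≠ 0` sum to Laplace
transforms of `x ^ m / (exp (2 π x) - 1)` at `± i t`. Multiply by `exp (-t)` and take Mellin
transforms: the left side becomes `Γ(s) ∑ w ^ m / (w + 1) ^ s`, a binomial combination of the
`ζ(s - k)` because `w ^ m = ((w + 1) - 1) ^ m`; on the right, the term `k = 0` gives
`m! Γ(s - m - 1)` and the others give `Γ(s)` times the integrals of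
`x ^ m (1 ± i x) ^ (-s) / (exp (2 π x) - 1)`. After division by `Γ(s)` both sides continue
analytically to `s = 0`. Compare derivatives there: the rational function `Γ(s - m - 1) / Γ(s)`
contributes the harmonic number, and the integrals contribute
`log (1 + i x) + log (1 - i x) = log (1 + x ^ 2)`. -/

section

open Set (Ioi)
open Complex (I)
open scoped Nat Topology

/-- By Cauchy's estimate, dominating the integrand also dominates its derivative on a smaller
ball. -/
lemma hasDerivAt_integral_of_dominated_of_holomorphic {α E : Type*} [MeasurableSpace α]
    {μ : Measure α} [NormedAddCommGroup E] [NormedSpace ℂ E] {F F' : ℂ → α → E} {bound : α → ℝ}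
    {z₀ : ℂ} {r : ℝ} (hr : 0 < r)
    (hF_meas : ∀ᶠ z in 𝓝 z₀, AEStronglyMeasurable (F z) μ)
    (hF'_meas : AEStronglyMeasurable (F' z₀) μ)
    (h_bound : ∀ᵐ a ∂μ, ∀ z ∈ Metric.ball z₀ r, ‖F z a‖ ≤ bound a)
    (bound_integrable : Integrable bound μ)
    (h_diff : ∀ᵐ a ∂μ, ∀ z ∈ Metric.ball z₀ r, HasDerivAt (F · a) (F' z a) z) :
    Integrable (F' z₀) μ ∧ HasDerivAt (fun z ↦ ∫ a, F z a ∂μ) (∫ a, F' z₀ a ∂μ) z₀ := by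
  have hr₂ : 0 < r / 2 := half_pos hr
  refine hasDerivAt_integral_of_dominated_loc_of_deriv_le (Metric.ball_mem_nhds z₀ hr₂) hF_meas
    (bound_integrable.mono' hF_meas.self_of_nhds ?_) hF'_meas ?_
    (bound_integrable.div_const (r / 2)) ?_
  · filter_upwards [h_bound] with a ha using ha z₀ (Metric.mem_ball_self hr)
  · filter_upwards [h_bound, h_diff] with a hbound hdiff z hz
    have hsub : Metric.closedBall z (r / 2) ⊆ Metric.ball z₀ r := fun w hw ↦ by
      have := dist_triangle w z z₀
      rw [Metric.mem_ball] at hz ⊢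
      rw [Metric.mem_closedBall] at hw
      linarith
    rw [← (hdiff z (hsub (Metric.mem_closedBall_self hr₂.le))).deriv]
    refine Complex.norm_deriv_le_of_forall_mem_sphere_norm_le hr₂ ⟨fun w hw ↦ ?_, ?_⟩
      fun w hw ↦ hbound w (hsub (Metric.sphere_subset_closedBall hw))
    · exact (hdiff w (hsub
        (Metric.ball_subset_closedBall hw))).differentiableAt.differentiableWithinAt
    · rw [closure_ball z hr₂.ne']
      exact fun w hw ↦ (hdiff w (hsub hw)).continuousAt.continuousWithinAt
  · filter_upwards [h_diff] with a ha z hz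
    exact ha z (Metric.ball_subset_ball (by linarith) hz)

lemma norm_cpow_sub_one_mul_cexp_neg_mul {t : ℝ} (ht : 0 < t) (s r : ℂ) :
    ‖(t : ℂ) ^ (s - 1) * Complex.exp (-(r * t))‖ = t ^ (s.re - 1) * Real.exp (-(r.re * t)) := by
  simp [Complex.norm_cpow_eq_rpow_re_of_pos ht, Complex.norm_exp]

lemma integrableOn_rpow_sub_one_mul_exp_neg_mul {σ b : ℝ} (hσ : 0 < σ) (hb : 0 < b) :
    IntegrableOn (fun t : ℝ ↦ t ^ (σ - 1) * Real.exp (-(b * t))) (Ioi 0) := by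
  simpa [Real.rpow_one] using
    integrableOn_rpow_mul_exp_neg_mul_rpow (p := 1) (s := σ - 1) (by linarith) one_pos hb

lemma aestronglyMeasurable_cpow_mul_cexp_neg_mul (s r : ℂ) :
    AEStronglyMeasurable (fun t : ℝ ↦ (t : ℂ) ^ s * Complex.exp (-(r * t)))
      (volume.restrict (Ioi 0)) := by
  refine ContinuousOn.aestronglyMeasurable (ContinuousOn.mul (fun t ht ↦ ?_) (by fun_prop))
    measurableSet_Ioi
  exact (Complex.continuousAt_ofReal_cpow_const t s (.inr ht.ne')).continuousWithinAt

lemma mellinConvergent_cexp_neg_mul {s r : ℂ} (hs : 0 < s.re) (hr : 0 < r.re) :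
    MellinConvergent (fun t : ℝ ↦ Complex.exp (-(r * t))) s := by
  refine (integrableOn_rpow_sub_one_mul_exp_neg_mul hs hr).mono'
    (aestronglyMeasurable_cpow_mul_cexp_neg_mul _ _) ?_
  filter_upwards [ae_restrict_mem measurableSet_Ioi] with t ht
  exact (norm_cpow_sub_one_mul_cexp_neg_mul ht s r).le

lemma differentiableAt_mellin_cexp_neg_mul {s r : ℂ} (hs : 0 < s.re) (hr : 0 < r.re) :
    DifferentiableAt ℂ (fun r : ℂ ↦ mellin (fun t : ℝ ↦ Complex.exp (-(r * t))) s) r := by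
  refine (hasDerivAt_integral_of_dominated_of_holomorphic (half_pos hr)
    (F := fun z (t : ℝ) ↦ (t : ℂ) ^ (s - 1) * Complex.exp (-(z * t)))
    (F' := fun z (t : ℝ) ↦ (t : ℂ) ^ (s - 1) * (Complex.exp (-(z * t)) * -(t : ℂ)))
    (.of_forall fun z ↦ aestronglyMeasurable_cpow_mul_cexp_neg_mul _ _) ?_ ?_
    (integrableOn_rpow_sub_one_mul_exp_neg_mul hs (half_pos hr)) ?_).2.differentiableAt
  · simp only [← mul_assoc]
    exact (aestronglyMeasurable_cpow_mul_cexp_neg_mul _ _).mul (by fun_prop)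
  · filter_upwards [ae_restrict_mem measurableSet_Ioi] with t (ht : 0 < t) z hz
    have hre : r.re / 2 ≤ z.re := by
      have := (Complex.abs_re_le_norm (z - r)).trans_lt (mem_ball_iff_norm.1 hz)
      rw [Complex.sub_re] at this
      linarith [(abs_lt.1 this).1]
    rw [norm_cpow_sub_one_mul_cexp_neg_mul ht]
    gcongr
  · refine .of_forall fun t z _ ↦ HasDerivAt.const_mul _ (HasDerivAt.cexp ?_)
    simpa using ((hasDerivAt_id z).mul_const (t : ℂ)).fun_neg

lemma hasMellin_cexp_neg_mul {s r : ℂ} (hs : 0 < s.re) (hr : 0 < r.re) :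
    HasMellin (fun t : ℝ ↦ Complex.exp (-(r * t))) s (r ^ (-s) * Complex.Gamma s) := by
  refine ⟨mellinConvergent_cexp_neg_mul hs hr, ?_⟩
  have hopen : IsOpen {z : ℂ | 0 < z.re} := isOpen_lt continuous_const Complex.continuous_re
  have hmellin : AnalyticOnNhd ℂ (fun r : ℂ ↦ mellin (fun t : ℝ ↦ Complex.exp (-(r * t))) s)
      {z | 0 < z.re} :=
    DifferentiableOn.analyticOnNhd
      (fun r hr ↦ (differentiableAt_mellin_cexp_neg_mul hs hr).differentiableWithinAt) hopen
  have hcpow : AnalyticOnNhd ℂ (fun r : ℂ ↦ r ^ (-s) * Complex.Gamma s) {z | 0 < z.re} :=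
    DifferentiableOn.analyticOnNhd (fun r hr ↦ ((differentiableAt_id.cpow_const
      (.inl hr)).mul_const _).differentiableWithinAt) hopen
  have hreal : ∀ x : ℝ, 0 < x →
      mellin (fun t : ℝ ↦ Complex.exp (-((x : ℂ) * t))) s = (x : ℂ) ^ (-s) * Complex.Gamma s := by
    intro x hx
    simp only [mellin, smul_eq_mul]
    rw [Complex.integral_cpow_mul_exp_neg_mul_Ioi hs hx, one_div, Complex.cpow_neg,
      Complex.inv_cpow _ _ (by simpa [Complex.arg_ofReal_of_nonneg hx.le] using pi_ne_zero.symm)]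
  have htendsto : Tendsto ((↑) : ℝ → ℂ) (𝓝[≠] 1) (𝓝[≠] 1) :=
    Complex.continuous_ofReal.continuousWithinAt.tendsto_nhdsWithin
      fun x hx ↦ Complex.ofReal_ne_one.2 hx
  refine hmellin.eqOn_of_preconnected_of_frequently_eq hcpow
    (convex_halfSpace_re_gt 0).isPreconnected (by simp : (1 : ℂ) ∈ {z : ℂ | 0 < z.re})
    (htendsto.frequently (Eventually.frequently ?_)) hr
  filter_upwards [(lt_mem_nhds one_pos).filter_mono nhdsWithin_le_nhds] with x hx using hreal x hx

lemma integral_pow_mul_cexp_neg_mul (m : ℕ) {r : ℂ} (hr : 0 < r.re) :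
    ∫ x in Ioi (0 : ℝ), (x : ℂ) ^ m * Complex.exp (-(r * x)) = m ! / r ^ (m + 1) := by
  have hs : 0 < ((m : ℂ) + 1).re := by
    simp only [Complex.add_re, Complex.natCast_re, Complex.one_re]
    positivity
  have h := (hasMellin_cexp_neg_mul (s := (m : ℂ) + 1) hs hr).2
  simp only [mellin, add_sub_cancel_right, Complex.cpow_natCast, smul_eq_mul] at h
  rw [h, Complex.Gamma_nat_eq_factorial, Complex.cpow_neg, ← Nat.cast_add_one,
    Complex.cpow_natCast, div_eq_inv_mul]

/-- The Bose–Einstein weight `x ^ m / (exp (2 π x) - 1)`, the kernel of Hermite-type integral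
representations of zeta values. -/
noncomputable def boseWeight (m : ℕ) (x : ℝ) : ℝ := x ^ m / (Real.exp (2 * π * x) - 1)

lemma measurable_boseWeight (m : ℕ) : Measurable (boseWeight m) := by
  unfold boseWeight; fun_prop

lemma boseWeight_mul_pow (m k : ℕ) (x : ℝ) : boseWeight m x * x ^ k = boseWeight (m + k) x := by
  rw [boseWeight, boseWeight, pow_add]; ring

lemma hasSum_boseWeight (m : ℕ) {x : ℝ} (hx : 0 < x) :
    HasSum (fun j : ℕ ↦ x ^ m * Real.exp (-(2 * π * (j + 1) * x))) (boseWeight m x) := by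
  have hlt : Real.exp (-(2 * π * x)) < 1 := Real.exp_lt_one_iff.2 (neg_neg_of_pos (by positivity))
  have hgeom := (hasSum_geometric_of_lt_one (Real.exp_pos _).le hlt).mul_left
    (x ^ m * Real.exp (-(2 * π * x)))
  convert! hgeom using 1
  · ext j
    rw [← Real.exp_nat_mul, mul_assoc (x ^ m), ← Real.exp_add]
    ring_nf
  · have hne : Real.exp (2 * π * x) - 1 ≠ 0 :=
      (sub_pos.2 (Real.one_lt_exp_iff.2 (by positivity))).ne'
    rw [boseWeight, Real.exp_neg]
    field_simp

lemma boseWeight_nonneg (m : ℕ) {x : ℝ} (hx : 0 < x) : 0 ≤ boseWeight m x :=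
  (hasSum_boseWeight m hx).nonneg fun _ ↦ by positivity

lemma boseWeight_succ_le (m : ℕ) {x : ℝ} (hx : 0 < x) :
    boseWeight (m + 1) x ≤ x ^ m * Real.exp (-(π * x)) := by
  have hexp : Real.exp (2 * π * x) - 1 = 2 * Real.sinh (π * x) * Real.exp (π * x) := by
    rw [Real.sinh_eq, mul_div_cancel₀ _ two_ne_zero, sub_mul, ← Real.exp_add, ← Real.exp_add,
      neg_add_cancel, Real.exp_zero]
    ring_nf
  have hsinh : x ≤ 2 * Real.sinh (π * x) := by
    have := Real.self_le_sinh_iff.2 (by positivity : 0 ≤ π * x)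
    nlinarith [Real.pi_gt_three]
  rw [boseWeight, hexp, Real.exp_neg, ← div_eq_mul_inv, ← div_div, pow_succ]
  gcongr
  exact (div_le_iff₀ (by linarith)).2 (by gcongr)

lemma integrableOn_boseWeight {m : ℕ} (hm : 1 ≤ m) : IntegrableOn (boseWeight m) (Ioi 0) := by
  obtain ⟨k, rfl⟩ := Nat.exists_eq_add_of_le' hm
  have hexp : IntegrableOn (fun x : ℝ ↦ x ^ k * Real.exp (-(π * x))) (Ioi 0) := by
    simpa using integrableOn_rpow_sub_one_mul_exp_neg_mul (σ := k + 1) (by positivity) pi_pos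
  refine hexp.mono' (measurable_boseWeight _).aestronglyMeasurable ?_
  filter_upwards [ae_restrict_mem measurableSet_Ioi] with x hx
  rw [Real.norm_of_nonneg (boseWeight_nonneg _ hx)]
  exact boseWeight_succ_le k hx

lemma integrableOn_boseWeight_mul_one_add_pow {m : ℕ} (hm : 1 ≤ m) (b : ℝ) (N : ℕ) :
    IntegrableOn (fun x ↦ boseWeight m x * (1 + b * x) ^ N) (Ioi 0) := by
  have hexpand : (fun x ↦ boseWeight m x * (1 + b * x) ^ N) =
      fun x ↦ ∑ k ∈ Finset.range (N + 1), b ^ k * N.choose k * boseWeight (m + k) x := by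
    ext x
    rw [add_comm, add_pow, Finset.mul_sum]
    refine Finset.sum_congr rfl fun k _ ↦ ?_
    rw [← boseWeight_mul_pow, one_pow, mul_pow]
    ring
  rw [hexpand]
  exact integrable_finsetSum _ fun k _ ↦ (integrableOn_boseWeight (by omega)).const_mul _

/-- The Laplace transform of `boseWeight m`, used on the closed right half-plane, where it sums the
terms of one sign of the Eisenstein series `∑ 1 / (z + 2 π j) ^ (m + 1)`. -/
noncomputable def boseLaplace (m : ℕ) (z : ℂ) : ℂ :=
  ∫ x in Ioi (0 : ℝ), (boseWeight m x : ℂ) * Complex.exp (-(z * x))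

lemma hasSum_boseLaplace {m : ℕ} (hm : 1 ≤ m) {z : ℂ} (hz : 0 ≤ z.re) :
    HasSum (fun j : ℕ ↦ (m ! : ℂ) / (2 * π * (j + 1) + z) ^ (m + 1)) (boseLaplace m z) := by
  have hterm : ∀ (j : ℕ) (x : ℝ), ((x ^ m * Real.exp (-(2 * π * (j + 1) * x)) : ℝ) : ℂ) *
      Complex.exp (-(z * x)) = (x : ℂ) ^ m * Complex.exp (-((2 * π * (j + 1) + z) * x)) := by
    intro j x
    push_cast
    rw [mul_assoc, ← Complex.exp_add]
    ring_nf
  have hre : ∀ j : ℕ, 0 < (2 * π * (j + 1) + z : ℂ).re := fun j ↦ by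
    have : (2 * π * (j + 1) + z : ℂ).re = 2 * π * (j + 1) + z.re := by simp
    rw [this]
    positivity
  simp only [← integral_pow_mul_cexp_neg_mul m (hre _), ← hterm]
  refine hasSum_integral_of_dominated_convergence
    (fun j x ↦ x ^ m * Real.exp (-(2 * π * (j + 1) * x)))
    (fun j ↦ (by fun_prop : Continuous _).aestronglyMeasurable) (fun j ↦ ?_) ?_ ?_ ?_
  · filter_upwards [ae_restrict_mem measurableSet_Ioi] with x (hx : 0 < x)
    rw [norm_mul, Complex.norm_real, Real.norm_of_nonneg (by positivity), Complex.norm_exp]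
    refine mul_le_of_le_one_right (by positivity) (Real.exp_le_one_iff.2 ?_)
    simpa using mul_nonneg hz hx.le
  · filter_upwards [ae_restrict_mem measurableSet_Ioi] with x hx
    exact (hasSum_boseWeight m hx).summable
  · refine (integrableOn_boseWeight hm).congr_fun (fun x hx ↦ ?_) measurableSet_Ioi
    exact (hasSum_boseWeight m hx).tsum_eq.symm
  · filter_upwards [ae_restrict_mem measurableSet_Ioi] with x hx
    exact (Complex.hasSum_ofReal.2 (hasSum_boseWeight m hx)).mul_right _

lemma hasSum_int_one_div_add_pow {m : ℕ} (hm : 1 ≤ m) (t : ℝ) :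
    HasSum (fun k : ℤ ↦ 1 / (I * t / (2 * π) + k) ^ (m + 1))
      ((2 * π : ℂ) ^ (m + 1) / m ! * boseLaplace m (I * t) + (2 * π / (I * t)) ^ (m + 1) +
        (-2 * π : ℂ) ^ (m + 1) / m ! * boseLaplace m (-I * t)) := by
  have hpi : (π : ℂ) ≠ 0 := mod_cast pi_ne_zero
  have hfac : (m ! : ℂ) ≠ 0 := mod_cast m.factorial_ne_zero
  have hpos := (hasSum_boseLaplace hm (z := I * t) (by simp)).mul_left
    ((2 * π : ℂ) ^ (m + 1) / m !)
  have hneg := (hasSum_boseLaplace hm (z := -I * t) (by simp)).mul_left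
    ((-2 * π : ℂ) ^ (m + 1) / m !)
  convert! HasSum.of_add_one_of_neg_add_one
    (f := fun k : ℤ ↦ 1 / (I * t / (2 * π) + k) ^ (m + 1)) (hpos.congr_fun ?_) (hneg.congr_fun ?_)
    using 1
  · simp [div_pow]
  · intro j
    have : I * t / (2 * π) + ((j + 1 : ℤ) : ℂ) = (2 * π * (j + 1) + I * t) / (2 * π) := by
      push_cast; field_simp; ring
    rw [this, div_pow]
    field_simp
  · intro j
    have : I * t / (2 * π) + ((-(j + 1) : ℤ) : ℂ) = (2 * π * (j + 1) + -I * t) / (-2 * π) := by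
      push_cast; field_simp; ring
    rw [this, div_pow]
    field_simp

lemma hasSum_pow_mul_exp_neg {m : ℕ} (hm : 1 ≤ m) {t : ℝ} (ht : 0 < t) :
    HasSum (fun w : ℕ ↦ (w : ℂ) ^ m * Complex.exp (-t) ^ w)
      (m ! / (t : ℂ) ^ (m + 1) + I ^ (m + 1) * boseLaplace m (I * t) +
        (-I) ^ (m + 1) * boseLaplace m (-I * t)) := by
  have hsummable : Summable (fun w : ℕ ↦ (w : ℂ) ^ m * Complex.exp (-t) ^ w) :=
    summable_pow_mul_geometric_of_norm_lt_one m (by simpa [Complex.norm_exp] using ht)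
  have hpi : (π : ℂ) ≠ 0 := mod_cast pi_ne_zero
  have htc : (t : ℂ) ≠ 0 := mod_cast ht.ne'
  have hfac : (m ! : ℂ) ≠ 0 := mod_cast m.factorial_ne_zero
  let z : UpperHalfPlane := ⟨I * t / (2 * π), by
    have : I * t / (2 * π) = ((t / (2 * π) : ℝ) : ℂ) * I := by push_cast; ring
    rw [this, Complex.im_ofReal_mul, Complex.I_im]
    positivity⟩
  have hlipschitz := EisensteinSeries.qExpansion_identity hm z
  have hexp : Complex.exp (2 * π * I * (z : ℂ)) = Complex.exp (-t) := by
    congr 1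
    change 2 * π * I * (I * t / (2 * π)) = -(t : ℂ)
    field_simp
    rw [Complex.I_sq]
  rw [hexp, show (z : ℂ) = I * t / (2 * π) from rfl,
    (hasSum_int_one_div_add_pow hm t).tsum_eq] at hlipschitz
  have hzero : (2 * π / (I * t)) ^ (m + 1) = (-2 * π * I) ^ (m + 1) * (1 / (t : ℂ) ^ (m + 1)) := by
    rw [← one_div_pow, ← mul_pow]
    congr 1
    field_simp
    simp
  have hpos : (2 * π : ℂ) ^ (m + 1) = (-2 * π * I) ^ (m + 1) * I ^ (m + 1) := by
    rw [← mul_pow, mul_assoc, Complex.I_mul_I]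
    ring_nf
  have hneg : (-2 * π : ℂ) ^ (m + 1) = (-2 * π * I) ^ (m + 1) * (-I) ^ (m + 1) := by
    rw [← mul_pow, mul_assoc, mul_neg, Complex.I_mul_I, neg_neg, mul_one]
  have hne : (-2 * π * I) ^ (m + 1) ≠ 0 := by simp [hpi]
  convert! hsummable.hasSum using 1
  refine mul_left_cancel₀ (div_ne_zero hne hfac) (Eq.trans ?_ hlipschitz)
  rw [hzero, hpos, hneg]
  field_simp
  ring

/-- The Hermite-type integral `∫₀^∞ x ^ m (1 + a x) ^ (-s) / (exp (2 π x) - 1) dx`; for `a = ± I` it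
represents combinations of values of the zeta function. -/
noncomputable def hermiteIntegral (m : ℕ) (a s : ℂ) : ℂ :=
  ∫ x in Ioi (0 : ℝ), (boseWeight m x : ℂ) * (1 + a * x) ^ (-s)

lemma integrable_prod_cpow_mul_boseWeight {m : ℕ} (hm : 1 ≤ m) {a s : ℂ} (ha : 0 ≤ a.re)
    (hs : 0 < s.re) :
    Integrable (fun p : ℝ × ℝ ↦ (p.1 : ℂ) ^ (s - 1) * Complex.exp (-(1 * p.1)) *
        boseWeight m p.2 * Complex.exp (-(a * p.1 * p.2)))
      ((volume.restrict (Ioi 0)).prod (volume.restrict (Ioi 0))) := by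
  have ht := mellinConvergent_cexp_neg_mul hs (r := 1) (by simp)
  refine (Integrable.mul_prod ht (integrableOn_boseWeight hm).ofReal).mul_bdd (c := 1)
    (by fun_prop) ?_
  rw [Measure.prod_restrict]
  filter_upwards [ae_restrict_mem (measurableSet_Ioi.prod measurableSet_Ioi)] with p ⟨hp₁, hp₂⟩
  rw [Complex.norm_exp, Real.exp_le_one_iff]
  simpa using mul_nonneg (mul_nonneg ha hp₁.le) hp₂.le

lemma hasMellin_cexp_neg_mul_boseLaplace {m : ℕ} (hm : 1 ≤ m) {a s : ℂ} (ha : 0 ≤ a.re)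
    (hs : 0 < s.re) :
    HasMellin (fun t : ℝ ↦ Complex.exp (-t) * boseLaplace m (a * t)) s
      (Complex.Gamma s * hermiteIntegral m a s) := by
  have hint := integrable_prod_cpow_mul_boseWeight hm ha hs
  have hinner : ∀ t : ℝ, (t : ℂ) ^ (s - 1) • (Complex.exp (-t) * boseLaplace m (a * t)) =
      ∫ x in Ioi (0 : ℝ), (t : ℂ) ^ (s - 1) * Complex.exp (-(1 * t)) * boseWeight m x *
        Complex.exp (-(a * t * x)) := fun t ↦ by
    simp only [boseLaplace, smul_eq_mul, mul_assoc, one_mul, integral_const_mul]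
  refine ⟨hint.integral_prod_left.congr (.of_forall fun t ↦ (hinner t).symm), ?_⟩
  rw [mellin, funext hinner, integral_integral_swap hint, hermiteIntegral, ← integral_const_mul]
  refine setIntegral_congr_fun measurableSet_Ioi fun x (hx : 0 < x) ↦ ?_
  have hre : 0 < (1 + a * x).re := by
    have := mul_nonneg ha hx.le
    simp only [Complex.add_re, Complex.one_re, Complex.re_mul_ofReal]
    linarith
  have hmellin := (hasMellin_cexp_neg_mul hs hre).2
  calc ∫ t in Ioi (0 : ℝ), (t : ℂ) ^ (s - 1) * Complex.exp (-(1 * t)) * boseWeight m x *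
          Complex.exp (-(a * t * x))
      = ∫ t in Ioi (0 : ℝ), boseWeight m x *
          ((t : ℂ) ^ (s - 1) • Complex.exp (-((1 + a * x) * t))) := by
        refine integral_congr_ae (.of_forall fun t ↦ ?_)
        have : -((1 + a * x) * t) = -(1 * t) + -(a * t * x) := by ring
        simp only [this, Complex.exp_add, smul_eq_mul]
        ring
    _ = Complex.Gamma s * (boseWeight m x * (1 + a * x) ^ (-s)) := by
        rw [integral_const_mul, ← mellin, hmellin]
        ring

lemma hasMellin_cexp_neg_mul_div_pow (N : ℕ) {s : ℂ} (hs : N < s.re) :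
    HasMellin (fun t : ℝ ↦ Complex.exp (-t) / (t : ℂ) ^ N) s (Complex.Gamma (s - N)) := by
  have hmellin := hasMellin_cexp_neg_mul (s := s - N) (r := 1) (by simpa using hs) (by simp)
  have hshift : ∀ t ∈ Ioi (0 : ℝ), (t : ℂ) ^ (s - N - 1) • Complex.exp (-(1 * t)) =
      (t : ℂ) ^ (s - 1) • (Complex.exp (-t) / (t : ℂ) ^ N) := fun t (ht : 0 < t) ↦ by
    rw [sub_right_comm, Complex.cpow_sub _ _ (mod_cast ht.ne'), Complex.cpow_natCast, one_mul,
      smul_eq_mul, smul_eq_mul]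
    ring
  refine ⟨hmellin.1.congr_fun hshift measurableSet_Ioi, ?_⟩
  rw [mellin, ← setIntegral_congr_fun measurableSet_Ioi hshift, ← mellin, hmellin.2]
  simp

lemma hasMellin_cexp_neg_mul_boseLaplace_sum {m : ℕ} (hm : 1 ≤ m) {s : ℂ}
    (hs : (m : ℝ) + 1 < s.re) :
    HasMellin (fun t : ℝ ↦ Complex.exp (-t) * (m ! / (t : ℂ) ^ (m + 1) +
        I ^ (m + 1) * boseLaplace m (I * t) + (-I) ^ (m + 1) * boseLaplace m (-I * t))) s
      (m ! * Complex.Gamma (s - (m + 1)) + Complex.Gamma s *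
        (I ^ (m + 1) * hermiteIntegral m I s + (-I) ^ (m + 1) * hermiteIntegral m (-I) s)) := by
  have hs₀ : 0 < s.re := by linarith [(Nat.cast_nonneg m : (0 : ℝ) ≤ m)]
  obtain ⟨hc₀, h₀⟩ := hasMellin_cexp_neg_mul_div_pow (m + 1) (s := s) (mod_cast hs)
  obtain ⟨hc₁, h₁⟩ := hasMellin_cexp_neg_mul_boseLaplace hm (a := I) (by simp) hs₀
  obtain ⟨hc₂, h₂⟩ := hasMellin_cexp_neg_mul_boseLaplace hm (a := -I) (by simp) hs₀
  obtain ⟨hsmul₀, hval₀⟩ := hasMellin_const_smul hc₀ (m ! : ℂ)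
  obtain ⟨hsmul₁, hval₁⟩ := hasMellin_const_smul hc₁ (I ^ (m + 1))
  obtain ⟨hsmul₂, hval₂⟩ := hasMellin_const_smul hc₂ ((-I) ^ (m + 1))
  obtain ⟨hc₀₁, h₀₁⟩ := hasMellin_add hsmul₀ hsmul₁
  convert! hasMellin_add hc₀₁ hsmul₂ using 1
  · ext t
    simp only [smul_eq_mul]
    ring
  · rw [h₀₁, hval₀, hval₁, hval₂, h₀, h₁, h₂]
    push_cast
    simp only [smul_eq_mul]
    ring

lemma hasSum_Gamma_mul_pow_div_cpow {m : ℕ} (hm : 1 ≤ m) {s : ℂ} (hs : (m : ℝ) + 1 < s.re) :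
    HasSum (fun w : ℕ ↦ Complex.Gamma s * (w : ℂ) ^ m / ((w : ℂ) + 1) ^ s)
      (m ! * Complex.Gamma (s - (m + 1)) + Complex.Gamma s *
        (I ^ (m + 1) * hermiteIntegral m I s + (-I) ^ (m + 1) * hermiteIntegral m (-I) s)) := by
  have hs₀ : 0 < s.re := by linarith [(Nat.cast_nonneg m : (0 : ℝ) ≤ m)]
  have hsummable : Summable (fun w : ℕ ↦ ‖(w : ℂ) ^ m‖ / ((w : ℝ) + 1) ^ s.re) := by
    refine .of_nonneg_of_le (fun w ↦ by positivity) (fun w ↦ ?_) <|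
      (summable_nat_add_iff 1).2 (Real.summable_one_div_nat_rpow.2 (lt_sub_iff_add_lt'.2 hs))
    have hw : (0 : ℝ) < w + 1 := by positivity
    push_cast
    rw [Real.rpow_sub hw, Real.rpow_natCast, one_div_div, norm_pow, Complex.norm_natCast]
    gcongr
    linarith
  have hexpansion : ∀ t ∈ Ioi (0 : ℝ), HasSum
      (fun w : ℕ ↦ (w : ℂ) ^ m * (Real.exp (-((w : ℝ) + 1) * t) : ℂ))
      (Complex.exp (-t) * (m ! / (t : ℂ) ^ (m + 1) + I ^ (m + 1) * boseLaplace m (I * t) +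
        (-I) ^ (m + 1) * boseLaplace m (-I * t))) := fun t ht ↦ by
    refine ((hasSum_pow_mul_exp_neg hm ht).mul_left (Complex.exp (-t))).congr_fun fun w ↦ ?_
    rw [mul_left_comm, ← Complex.exp_nat_mul, ← Complex.exp_add]
    push_cast
    ring_nf
  have hsum := hasSum_mellin (fun w ↦ .inr (by positivity)) hs₀ hexpansion hsummable
  rw [(hasMellin_cexp_neg_mul_boseLaplace_sum hm hs).2] at hsum
  exact mod_cast hsum

lemma Gamma_eq_Gamma_sub_mul_prod (N : ℕ) {s : ℂ} (hs : ∀ j < N, s ≠ j + 1) :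
    Complex.Gamma s = Complex.Gamma (s - N) * ∏ j ∈ Finset.range N, (s - (j + 1)) := by
  induction N with
  | zero => simp
  | succ N ih =>
    have hstep := Complex.Gamma_add_one (s - (N + 1)) (sub_ne_zero.2 (hs N N.lt_succ_self))
    rw [ih fun j hj ↦ hs j (hj.trans N.lt_succ_self), Finset.prod_range_succ,
      show s - N = s - (N + 1) + 1 by ring, hstep]
    push_cast
    ring

lemma hasSum_pow_div_add_one_cpow (m : ℕ) {s : ℂ} (hs : (m : ℝ) + 1 < s.re) :
    HasSum (fun w : ℕ ↦ (w : ℂ) ^ m / ((w : ℂ) + 1) ^ s) ((-1) ^ m *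
      ∑ k ∈ Finset.range (m + 1), (-1 : ℂ) ^ k * (m.choose k : ℂ) * riemannZeta (s - k)) := by
  have hzeta : ∀ k ∈ Finset.range (m + 1),
      HasSum (fun w : ℕ ↦ 1 / ((w : ℂ) + 1) ^ (s - k)) (riemannZeta (s - k)) := fun k hk ↦ by
    have hkm : (k : ℝ) ≤ m := mod_cast Finset.mem_range_succ_iff.1 hk
    have hre : 1 < (s - k).re := by
      rw [Complex.sub_re, Complex.natCast_re]
      linarith
    rw [zeta_eq_tsum_one_div_nat_add_one_cpow hre]
    simpa using ((summable_nat_add_iff 1).2 (Complex.summable_one_div_nat_cpow.2 hre)).hasSum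
  refine ((hasSum_sum fun k hk ↦ (hzeta k hk).mul_left _).mul_left _).congr_fun fun w ↦ ?_
  have hw : (w : ℂ) + 1 ≠ 0 := w.cast_add_one_ne_zero
  have hbinomial : (w : ℂ) ^ m =
      (-1) ^ m * ∑ k ∈ Finset.range (m + 1), (-1) ^ k * (m.choose k : ℂ) * ((w : ℂ) + 1) ^ k := by
    calc (w : ℂ) ^ m = (-1) ^ m * (-((w : ℂ) + 1) + 1) ^ m := by rw [← mul_pow]; ring
      _ = _ := by
        rw [add_pow]
        refine congrArg _ (Finset.sum_congr rfl fun k _ ↦ ?_)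
        rw [neg_pow ((w : ℂ) + 1)]
        ring
  rw [hbinomial, mul_div_assoc, Finset.sum_div]
  refine congrArg _ (Finset.sum_congr rfl fun k _ ↦ ?_)
  rw [Complex.cpow_sub _ _ hw, Complex.cpow_natCast, one_div_div, mul_div_assoc]

lemma sum_choose_mul_riemannZeta_of_lt_re {m : ℕ} (hm : 1 ≤ m) {s : ℂ}
    (hs : (m : ℝ) + 1 < s.re) :
    ∑ k ∈ Finset.range (m + 1), (-1 : ℂ) ^ k * (m.choose k : ℂ) * riemannZeta (s - k) =
      (-1) ^ m * (m ! * (∏ j ∈ Finset.range (m + 1), (s - (j + 1)))⁻¹ +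
        (I ^ (m + 1) * hermiteIntegral m I s + (-I) ^ (m + 1) * hermiteIntegral m (-I) s)) := by
  have hGamma : Complex.Gamma s ≠ 0 := Complex.Gamma_ne_zero_of_re_pos (by
    linarith [(Nat.cast_nonneg m : (0 : ℝ) ≤ m)])
  have hshift : Complex.Gamma s =
      Complex.Gamma (s - (m + 1)) * ∏ j ∈ Finset.range (m + 1), (s - (j + 1)) := by
    refine mod_cast Gamma_eq_Gamma_sub_mul_prod (m + 1) fun j hj hsj ↦ ?_
    have hjm : (j : ℝ) + 1 ≤ m + 1 := mod_cast hj
    simp only [hsj, Complex.add_re, Complex.natCast_re, Complex.one_re] at hs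
    linarith
  have hsum := (hasSum_Gamma_mul_pow_div_cpow hm hs).unique
    (((hasSum_pow_div_add_one_cpow m hs).mul_left (Complex.Gamma s)).congr_fun
      fun w ↦ mul_div_assoc _ _ _)
  have hsign : ((-1 : ℂ) ^ m) * (-1) ^ m = 1 := by rw [← mul_pow]; simp
  have hprod : ∏ j ∈ Finset.range (m + 1), (s - (j + 1)) ≠ 0 :=
    right_ne_zero_of_mul (hshift ▸ hGamma)
  rw [← (div_eq_iff hprod).2 hshift, div_eq_mul_inv] at hsum
  refine mul_left_cancel₀ hGamma ?_
  linear_combination (-(-1) ^ m) * hsum - Complex.Gamma s * (∑ k ∈ Finset.range (m + 1),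
    (-1 : ℂ) ^ k * (m.choose k : ℂ) * riemannZeta (s - k)) * hsign

lemma norm_cpow_le_norm_pow_mul_exp {z s : ℂ} {N : ℕ} (hz : 1 ≤ ‖z‖) (hs : ‖s‖ ≤ N) :
    ‖z ^ s‖ ≤ ‖z‖ ^ N * Real.exp (π * N) := by
  have hre : s.re ≤ N := (Complex.re_le_norm s).trans hs
  have him : -(Complex.arg z * s.im) ≤ π * N := by
    refine (neg_le_abs _).trans ?_
    rw [abs_mul]
    exact mul_le_mul (Complex.abs_arg_le_pi z) ((Complex.abs_im_le_norm s).trans hs)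
      (abs_nonneg _) pi_pos.le
  calc ‖z ^ s‖ ≤ ‖z‖ ^ s.re / Real.exp (Complex.arg z * s.im) := Complex.norm_cpow_le z s
    _ = ‖z‖ ^ s.re * Real.exp (-(Complex.arg z * s.im)) := by rw [Real.exp_neg, div_eq_mul_inv]
    _ ≤ ‖z‖ ^ (N : ℝ) * Real.exp (π * N) := by gcongr
    _ = ‖z‖ ^ N * Real.exp (π * N) := by rw [Real.rpow_natCast]

lemma one_le_re_one_add_mul {a : ℂ} (ha : 0 ≤ a.re) {x : ℝ} (hx : 0 < x) :
    1 ≤ (1 + a * x).re := by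
  simpa using mul_nonneg ha hx.le

lemma hasDerivAt_hermiteIntegral {m : ℕ} (hm : 1 ≤ m) {a : ℂ} (ha : 0 ≤ a.re) (s : ℂ) :
    IntegrableOn (fun x : ℝ ↦ (boseWeight m x : ℂ) *
        ((1 + a * x) ^ (-s) * -Complex.log (1 + a * x))) (Ioi 0) ∧
      HasDerivAt (hermiteIntegral m a) (∫ x in Ioi (0 : ℝ), (boseWeight m x : ℂ) *
        ((1 + a * x) ^ (-s) * -Complex.log (1 + a * x))) s := by
  obtain ⟨N, hN⟩ := exists_nat_ge (‖s‖ + 1)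
  have hweight := measurable_boseWeight m
  refine hasDerivAt_integral_of_dominated_of_holomorphic one_pos
    (F := fun z (x : ℝ) ↦ (boseWeight m x : ℂ) * (1 + a * x) ^ (-z))
    (F' := fun z (x : ℝ) ↦ (boseWeight m x : ℂ) *
      ((1 + a * x) ^ (-z) * -Complex.log (1 + a * x)))
    (bound := fun x ↦ boseWeight m x * (1 + ‖a‖ * x) ^ N * Real.exp (π * N))
    (.of_forall fun z ↦ by fun_prop) (by fun_prop) ?_
    ((integrableOn_boseWeight_mul_one_add_pow hm ‖a‖ N).mul_const _) ?_
  · filter_upwards [ae_restrict_mem measurableSet_Ioi] with x (hx : 0 < x) z hz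
    have hbase : 1 ≤ ‖1 + a * x‖ :=
      (one_le_re_one_add_mul ha hx).trans (Complex.re_le_norm _)
    have hbase_le : ‖1 + a * x‖ ≤ 1 + ‖a‖ * x := (norm_add_le _ _).trans (by simp [abs_of_pos hx])
    have hzN : ‖-z‖ ≤ N := by
      have := norm_sub_norm_le z s
      rw [norm_neg]
      linarith [mem_ball_iff_norm.1 hz]
    rw [norm_mul, Complex.norm_real, Real.norm_of_nonneg (boseWeight_nonneg m hx), mul_assoc]
    refine mul_le_mul_of_nonneg_left ?_ (boseWeight_nonneg m hx)
    exact (norm_cpow_le_norm_pow_mul_exp hbase hzN).trans (by gcongr)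
  · filter_upwards [ae_restrict_mem measurableSet_Ioi] with x hx z _
    have hne : 1 + a * x ≠ 0 := Complex.ne_zero_of_re_pos
      (one_pos.trans_le (one_le_re_one_add_mul ha hx))
    simpa using ((hasDerivAt_id z).fun_neg.const_cpow (.inl hne)).const_mul (boseWeight m x : ℂ)

lemma differentiable_hermiteIntegral {m : ℕ} (hm : 1 ≤ m) {a : ℂ} (ha : 0 ≤ a.re) :
    Differentiable ℂ (hermiteIntegral m a) :=
  fun s ↦ (hasDerivAt_hermiteIntegral hm ha s).2.differentiableAt

lemma eqOn_compl_of_finite_of_eventuallyEq {E : Type*} [NormedAddCommGroup E] [NormedSpace ℂ E]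
    [CompleteSpace E] {T : Set ℂ} (hT : T.Finite) {f g : ℂ → E} (hf : DifferentiableOn ℂ f Tᶜ)
    (hg : DifferentiableOn ℂ g Tᶜ) {z₀ : ℂ} (hz₀ : z₀ ∉ T) (hfg : f =ᶠ[𝓝 z₀] g) :
    Set.EqOn f g Tᶜ := by
  have hopen : IsOpen Tᶜ := hT.isClosed.isOpen_compl
  have hconn : IsPreconnected Tᶜ :=
    (hT.countable.isPathConnected_compl_of_one_lt_rank
      (by simp [Complex.rank_real_complex])).isConnected.isPreconnected
  exact (hf.analyticOnNhd hopen).eqOn_of_preconnected_of_eventuallyEq (hg.analyticOnNhd hopen)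
    hconn hz₀ hfg

lemma sum_choose_mul_riemannZeta {m : ℕ} (hm : 1 ≤ m) {s : ℂ} (hs : ∀ j < m + 1, s ≠ j + 1) :
    ∑ k ∈ Finset.range (m + 1), (-1 : ℂ) ^ k * (m.choose k : ℂ) * riemannZeta (s - k) =
      (-1) ^ m * (m ! * (∏ j ∈ Finset.range (m + 1), (s - (j + 1)))⁻¹ +
        (I ^ (m + 1) * hermiteIntegral m I s + (-I) ^ (m + 1) * hermiteIntegral m (-I) s)) := by
  let poles : Set ℂ := Set.image (fun j : ℕ ↦ (j : ℂ) + 1) (Set.Iio (m + 1))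
  have hpoles : ∀ z, z ∈ polesᶜ ↔ ∀ j < m + 1, z ≠ j + 1 := by
    simp only [poles, Set.mem_compl_iff, Set.mem_image, Set.mem_Iio, not_exists, not_and, ne_eq,
      eq_comm, implies_true]
  have hzeta : DifferentiableOn ℂ (fun z ↦ ∑ k ∈ Finset.range (m + 1),
      (-1 : ℂ) ^ k * (m.choose k : ℂ) * riemannZeta (z - k)) polesᶜ := fun z hz ↦ by
    refine (DifferentiableAt.fun_sum fun k hk ↦ .const_mul ?_ _).differentiableWithinAt
    refine (differentiableAt_riemannZeta fun h ↦ ?_).comp z (differentiableAt_id.sub_const _)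
    exact (hpoles z).1 hz k (Finset.mem_range.1 hk) (by linear_combination h)
  have hhermite : DifferentiableOn ℂ (fun z : ℂ ↦ (-1) ^ m *
      (m ! * (∏ j ∈ Finset.range (m + 1), (z - (j + 1)))⁻¹ +
        (I ^ (m + 1) * hermiteIntegral m I z + (-I) ^ (m + 1) * hermiteIntegral m (-I) z)))
      polesᶜ := fun z hz ↦ by
    have hprod : ∏ j ∈ Finset.range (m + 1), (z - (j + 1)) ≠ 0 := Finset.prod_ne_zero_iff.2
      fun j hj ↦ sub_ne_zero.2 ((hpoles z).1 hz j (Finset.mem_range.1 hj))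
    have hpos := differentiable_hermiteIntegral hm (a := I) (by simp) z
    have hneg := differentiable_hermiteIntegral hm (a := -I) (by simp) z
    have hinv : DifferentiableAt ℂ
        (fun z : ℂ ↦ (∏ j ∈ Finset.range (m + 1), (z - (j + 1)))⁻¹) z :=
      .fun_inv (by fun_prop) hprod
    exact (((hinv.const_mul _).fun_add ((hpos.const_mul _).fun_add (hneg.const_mul _))).const_mul
      _).differentiableWithinAt
  have hbase : (m : ℂ) + 2 ∈ polesᶜ := (hpoles _).2 fun j hj h ↦ by
    have : m + 2 = j + 1 := mod_cast h
    omega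
  have hre : (m : ℝ) + 1 < ((m : ℂ) + 2).re := by simp
  refine eqOn_compl_of_finite_of_eventuallyEq ((Set.finite_Iio _).image _) hzeta hhermite hbase ?_
    ((hpoles s).2 hs)
  filter_upwards [(isOpen_lt continuous_const Complex.continuous_re).mem_nhds hre] with z hz
  exact sum_choose_mul_riemannZeta_of_lt_re hm hz

lemma prod_zero_sub_add_one (N : ℕ) :
    ∏ j ∈ Finset.range N, ((0 : ℂ) - (j + 1)) = (-1) ^ N * N ! := by
  rw [← Finset.prod_range_add_one_eq_factorial]
  simp only [zero_sub, Finset.prod_neg, Finset.card_range]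
  push_cast
  rfl

lemma hasDerivAt_inv_prod_sub_add_one (N : ℕ) :
    HasDerivAt (fun s : ℂ ↦ (∏ j ∈ Finset.range N, (s - (j + 1)))⁻¹)
      ((-1) ^ N * harmonic N / N !) 0 := by
  induction N with
  | zero => simpa using hasDerivAt_const (0 : ℂ) (1 : ℂ)
  | succ N ih =>
    have hN : (N : ℂ) + 1 ≠ 0 := N.cast_add_one_ne_zero
    have hfac : (N ! : ℂ) ≠ 0 := mod_cast N.factorial_ne_zero
    have hfactor : HasDerivAt (fun s : ℂ ↦ (s - (N + 1))⁻¹) (-1 / (0 - (N + 1)) ^ 2) 0 :=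
      ((hasDerivAt_id (0 : ℂ)).sub_const _).fun_inv (sub_ne_zero.2 hN.symm)
    simp only [Finset.prod_range_succ, mul_inv]
    refine (ih.mul hfactor).congr_deriv ?_
    rw [prod_zero_sub_add_one, mul_inv, ← inv_pow, inv_neg_one, harmonic_succ,
      Nat.factorial_succ, zero_sub, neg_sq, inv_neg]
    push_cast
    field_simp
    ring

lemma integrableOn_boseWeight_mul_log {m : ℕ} (hm : 1 ≤ m) {a : ℂ} (ha : 0 ≤ a.re) :
    IntegrableOn (fun x : ℝ ↦ (boseWeight m x : ℂ) * Complex.log (1 + a * x)) (Ioi 0) := by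
  simpa using (hasDerivAt_hermiteIntegral hm ha 0).1.neg

lemma hasDerivAt_hermiteIntegral_zero {m : ℕ} (hm : 1 ≤ m) {a : ℂ} (ha : 0 ≤ a.re) :
    HasDerivAt (hermiteIntegral m a)
      (-∫ x in Ioi (0 : ℝ), (boseWeight m x : ℂ) * Complex.log (1 + a * x)) 0 := by
  simpa [integral_neg] using (hasDerivAt_hermiteIntegral hm ha 0).2

lemma sum_choose_mul_deriv_riemannZeta {m : ℕ} (hm : 1 ≤ m) :
    ∑ k ∈ Finset.range (m + 1), (-1 : ℂ) ^ k * (m.choose k : ℂ) * deriv riemannZeta (-k) =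
      -(harmonic (m + 1) / (m + 1)) - (-1) ^ m *
        (I ^ (m + 1) * (∫ x in Ioi (0 : ℝ), (boseWeight m x : ℂ) * Complex.log (1 + I * x)) +
          (-I) ^ (m + 1) *
            ∫ x in Ioi (0 : ℝ), (boseWeight m x : ℂ) * Complex.log (1 + -I * x)) := by
  have hzeta : HasDerivAt (fun s ↦ ∑ k ∈ Finset.range (m + 1),
      (-1 : ℂ) ^ k * (m.choose k : ℂ) * riemannZeta (s - k))
      (∑ k ∈ Finset.range (m + 1), (-1 : ℂ) ^ k * (m.choose k : ℂ) * deriv riemannZeta (-k)) 0 := by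
    refine .fun_sum fun k _ ↦ .const_mul _ (.comp_sub_const 0 (k : ℂ) ?_)
    rw [zero_sub]
    refine (differentiableAt_riemannZeta fun h ↦ ?_).hasDerivAt
    exact k.cast_add_one_ne_zero (R := ℂ) (by linear_combination -h)
  have hev : ∀ᶠ s : ℂ in 𝓝 0, ∀ j < m + 1, s ≠ j + 1 := by
    refine (Set.finite_Iio (m + 1)).eventually_all.2 fun j _ ↦ ?_
    exact isOpen_ne.mem_nhds j.cast_add_one_ne_zero.symm
  have hhermite := (((hasDerivAt_inv_prod_sub_add_one (m + 1)).const_mul (m ! : ℂ)).fun_add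
    (((hasDerivAt_hermiteIntegral_zero hm (a := I) (by simp)).const_mul (I ^ (m + 1))).fun_add
      ((hasDerivAt_hermiteIntegral_zero hm (a := -I) (by simp)).const_mul
        ((-I) ^ (m + 1))))).const_mul ((-1 : ℂ) ^ m)
  rw [hzeta.unique (hhermite.congr_of_eventuallyEq
    (hev.mono fun s hs ↦ sum_choose_mul_riemannZeta hm hs))]
  have hsign : ((-1 : ℂ) ^ m) * (-1) ^ (m + 1) = -1 := by
    rw [pow_succ, ← mul_assoc, ← mul_pow]
    simp
  have hfac : (m ! : ℂ) * ((-1) ^ (m + 1) * harmonic (m + 1) / (m + 1)!) =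
      (-1) ^ (m + 1) * (harmonic (m + 1) / (m + 1)) := by
    have : (m ! : ℂ) ≠ 0 := mod_cast m.factorial_ne_zero
    rw [Nat.factorial_succ]
    push_cast
    field_simp
  rw [hfac]
  linear_combination (harmonic (m + 1) / (m + 1) : ℂ) * hsign

lemma log_add_log_conj {z : ℂ} (hz : z ∈ Complex.slitPlane) :
    Complex.log z + Complex.log (starRingEnd ℂ z) = Real.log (Complex.normSq z) := by
  rw [Complex.log_conj _ (Complex.slitPlane_arg_ne_pi hz), Complex.add_conj, Complex.log_re,
    Complex.normSq_eq_norm_sq, Real.log_pow]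
  push_cast
  ring

lemma log_one_add_I_mul_add_log_one_sub_I_mul (x : ℝ) :
    Complex.log (1 + I * x) + Complex.log (1 + -I * x) = Real.log (1 + x ^ 2) := by
  have h := log_add_log_conj (z := 1 + I * x) (.inl (by simp))
  rw [Complex.normSq_apply] at h
  simpa [← sq] using h

lemma integral_boseWeight_mul_log_add {m : ℕ} (hm : 1 ≤ m) :
    (∫ x in Ioi (0 : ℝ), (boseWeight m x : ℂ) * Complex.log (1 + I * x)) +
        ∫ x in Ioi (0 : ℝ), (boseWeight m x : ℂ) * Complex.log (1 + -I * x) =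
      ((∫ x in Ioi (0 : ℝ),
        x ^ m * Real.log (1 + x ^ 2) / (Real.exp (2 * π * x) - 1) : ℝ) : ℂ) := by
  rw [← integral_add (integrableOn_boseWeight_mul_log hm (by simp))
    (integrableOn_boseWeight_mul_log hm (by simp)), ← integral_complex_ofReal]
  congr! with x
  rw [← mul_add, log_one_add_I_mul_add_log_one_sub_I_mul, boseWeight, ← Complex.ofReal_mul,
    div_mul_eq_mul_div]

end

/-- (−1)ⁿ ∫₀^∞ x^{2n−1} log(1+x²)/(e^{2πx}−1) dx
    = H_{2n}/(2n) + ∑_{k=0}^{2n−1} (−1)^k C(2n−1,k) ζ'(−k). -/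
theorem integral_pow_log_eq (n : ℕ) (hn : 1 ≤ n) :
    (-1 : ℂ) ^ n *
        ((∫ x in Set.Ioi (0 : ℝ),
            x ^ (2 * n - 1) * Real.log (1 + x ^ 2) / (Real.exp (2 * π * x) - 1) : ℝ) : ℂ) =
      (harmonic (2 * n) : ℂ) / (2 * (n : ℂ))
        + ∑ k ∈ Finset.range (2 * n),
            (-1 : ℂ) ^ k * (Nat.choose (2 * n - 1) k : ℂ) * deriv riemannZeta (-(k : ℂ)) := by
  obtain ⟨m, hm⟩ : ∃ m, 2 * n = m + 1 := ⟨2 * n - 1, by omega⟩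
  have hm₁ : 1 ≤ m := by omega
  have hn' : 2 * (n : ℂ) = m + 1 := mod_cast hm
  have hsign : (-1 : ℂ) ^ m = -1 := Odd.neg_one_pow ⟨n - 1, by omega⟩
  have hI : Complex.I ^ (m + 1) = (-1) ^ n := by rw [← hm, pow_mul, Complex.I_sq]
  have hnegI : (-Complex.I) ^ (m + 1) = (-1) ^ n := by rw [← hm, pow_mul, neg_sq, Complex.I_sq]
  rw [hm, hn', Nat.add_sub_cancel, ← integral_boseWeight_mul_log_add hm₁,
    sum_choose_mul_deriv_riemannZeta hm₁, hsign, hI, hnegI]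
  ring
end
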